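/- arXiv:1904.09528 — 2 statements merged into one kernel-verified Lean document; each statement's English description precedes it below -/
import Mathlib

section
/- For every θ ∈ (0,1) there is a constant C_θ > 0 depending only on θ, and there is a universal constant C > 0, with the following property. Let Y, λ, S, μ, M₀, F_Y be as in the context, with Y satisfying the well-stretched condition with constant λ > 0 and ‖Y‖_{Ḣ^{2+θ}(𝕋)} < ∞. Then F_Y ∈ L²(𝕋) with ‖F_Y‖_{L²(𝕋)} ≤ C μ ‖Y‖_{Ḣ²(𝕋)}, and ‖F_Y‖_{Ḣ^θ(𝕋)} ≤ C_θ μ ‖Y‖_{Ḣ^{2+θ}(𝕋)}. -/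
open MeasureTheory Real Filter Topology
open scoped RealInnerProductSpace ENNReal

noncomputable section

abbrev E2 : Type := EuclideanSpace ℝ (Fin 2)

/-- Squared modulus of the `k`-th Fourier coefficient
`ĝ_k = ∫_{-π}^{π} g(s) e^{-iks} ds` (componentwise complexified). -/
def coefSq (g : ℝ → E2) (k : ℤ) : ℝ :=
  ∑ j : Fin 2,
    Complex.normSq (∫ s in (-π)..π, (g s j : ℂ) * Complex.exp (-Complex.I * (k : ℂ) * (s : ℂ)))

/-- Summand of the homogeneous Sobolev seminorm: `|k|^{2σ} |ĝ_k|²` for `k ≠ 0`. -/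
def sobSummand (σ : ℝ) (g : ℝ → E2) (k : ℤ) : ℝ :=
  if k = 0 then 0 else (|k| : ℝ) ^ (2 * σ) * coefSq g k

/-- The homogeneous Sobolev seminorm `‖g‖_{Ḣ^σ(𝕋)} = (Σ_{k≠0} |k|^{2σ} |ĝ_k|²)^{1/2}`. -/
def sobNorm (σ : ℝ) (g : ℝ → E2) : ℝ := Real.sqrt (∑' k : ℤ, sobSummand σ g k)

/-- The `L²(𝕋)` norm. -/
def normL2v (g : ℝ → E2) : ℝ := Real.sqrt (∫ s in (-π)..π, ‖g s‖ ^ 2)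

/-- The `L^∞(𝕋)` norm. -/
def normLinf (g : ℝ → E2) : ℝ := ⨆ s : ℝ, ‖g s‖


/-- restricted measure -/
abbrev IP : Measure ℝ := volume.restrict (Set.Ioc (-π) π)

def W (θ h : ℝ) : ℝ≥0∞ := ENNReal.ofReal (h ^ (-1 - 2 * θ))

lemma measurable_W (θ : ℝ) : Measurable (W θ) := by
  unfold W; fun_prop

lemma coefSq_nonneg (g : ℝ → E2) (k : ℤ) : 0 ≤ coefSq g k :=
  Finset.sum_nonneg fun _ _ => Complex.normSq_nonneg _

lemma fourierCoeffOn_eq_mine (u : ℝ → ℂ) (k : ℤ) :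
    fourierCoeffOn (show -π < π by linarith [pi_pos]) u k
      = (1 / (2 * π) : ℝ) • ∫ s in (-π)..π, u s * Complex.exp (-Complex.I * (k : ℂ) * (s : ℂ)) := by
  rw [fourierCoeffOn_eq_integral]
  rw [show π - -π = 2 * π by ring]
  congr 1
  apply intervalIntegral.integral_congr
  intro s _
  simp only [fourier_coe_apply, smul_eq_mul]
  rw [mul_comm]
  congr 2
  have : (π : ℂ) ≠ 0 := by exact_mod_cast pi_ne_zero
  push_cast
  field_simp

lemma parseval_C (u : ℝ → ℂ) (hu : MemLp u 2 IP) :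
    ∑' k : ℤ, ENNReal.ofReal (Complex.normSq
      (∫ s in (-π)..π, u s * Complex.exp (-Complex.I * (k : ℂ) * (s : ℂ))))
      = ENNReal.ofReal (2 * π) * ∫⁻ t in Set.Ioc (-π) π, ‖u t‖ₑ ^ 2 := by
  have h := hasSum_sq_fourierCoeffOn (show -π < π by linarith [pi_pos]) hu
  have h2 := h.mul_left ((2 * π) ^ 2)
  have hpi := pi_pos
  have e1 : ∀ k : ℤ, (2 * π) ^ 2 * ‖fourierCoeffOn (show -π < π by linarith [pi_pos]) u k‖ ^ 2
      = Complex.normSq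
      (∫ s in (-π)..π, u s * Complex.exp (-Complex.I * (k : ℂ) * (s : ℂ))) := by
    intro k
    rw [fourierCoeffOn_eq_mine, norm_smul, Complex.normSq_eq_norm_sq, Real.norm_eq_abs, abs_of_pos (by positivity)]
    field_simp
  simp_rw [e1] at h2
  rw [← ENNReal.ofReal_tsum_of_nonneg (fun _ => Complex.normSq_nonneg _) h2.summable, h2.tsum_eq]
  rw [intervalIntegral.integral_of_le (by linarith), smul_eq_mul]
  rw [show (2 * π) ^ 2 * ((π - -π)⁻¹ * ∫ x in Set.Ioc (-π) π, ‖u x‖ ^ 2)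
    = (2 * π) * ∫ x in Set.Ioc (-π) π, ‖u x‖ ^ 2 by rw [show π - -π = 2 * π by ring]; field_simp]
  rw [ENNReal.ofReal_mul (by positivity)]
  congr 1
  rw [ofReal_integral_eq_lintegral_ofReal]
  · apply lintegral_congr; intro x
    rw [ENNReal.ofReal_pow (norm_nonneg _), ofReal_norm]
  · exact hu.norm.integrable_sq
  · exact Eventually.of_forall fun x => by positivity

lemma enorm_sq_E2 (v : E2) : ‖v‖ₑ ^ 2 = ∑ j : Fin 2, ‖((v j : ℝ) : ℂ)‖ₑ ^ 2 := by
  rw [← ofReal_norm, ← ENNReal.ofReal_pow (norm_nonneg _), EuclideanSpace.norm_sq_eq,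
    ENNReal.ofReal_sum_of_nonneg (fun _ _ => by positivity)]
  refine Finset.sum_congr rfl fun j _ => ?_
  rw [ENNReal.ofReal_pow (norm_nonneg _), ofReal_norm]
  congr 1
  rw [← ofReal_norm, ← ofReal_norm, Complex.norm_real]

lemma memLp_comp {p : ℝ≥0∞} {m : Measure ℝ} {u : ℝ → E2} (hu : MemLp u p m) (j : Fin 2) :
    MemLp (fun t => u t j) p m :=
  (EuclideanSpace.proj (𝕜 := ℝ) j).comp_memLp' hu

lemma memLp_compC {p : ℝ≥0∞} {m : Measure ℝ} {u : ℝ → E2} (hu : MemLp u p m) (j : Fin 2) :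
    MemLp (fun t => ((u t j : ℝ) : ℂ)) p m :=
  Complex.ofRealCLM.comp_memLp' (memLp_comp hu j)

lemma parseval_E (u : ℝ → E2) (hu : MemLp u 2 IP) :
    ∑' k : ℤ, ENNReal.ofReal (coefSq u k)
      = ENNReal.ofReal (2 * π) * ∫⁻ t in Set.Ioc (-π) π, ‖u t‖ₑ ^ 2 := by
  unfold coefSq
  simp_rw [ENNReal.ofReal_sum_of_nonneg (fun _ _ => Complex.normSq_nonneg _), enorm_sq_E2]
  rw [Summable.tsum_finsetSum (fun _ _ => ENNReal.summable)]
  rw [lintegral_finsetSum']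
  · rw [Finset.mul_sum]
    exact Finset.sum_congr rfl fun j _ => parseval_C _ (memLp_compC hu j)
  · intro j _
    exact (memLp_compC hu j).1.enorm.pow_const 2

lemma shift_C (u : ℝ → ℂ) (hp : Function.Periodic u (2 * π))
    (hi : IntervalIntegrable u volume (-π) π) (h : ℝ) (k : ℤ) :
    Complex.normSq (∫ s in (-π)..π, (u (s + h) - u s) *
      Complex.exp (-Complex.I * (k : ℂ) * (s : ℂ))) =
    (2 - 2 * cos (k * h)) * Complex.normSq (∫ s in (-π)..π, u s *
      Complex.exp (-Complex.I * (k : ℂ) * (s : ℂ))) := by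
  set e : ℝ → ℂ := fun s => Complex.exp (-Complex.I * (k : ℂ) * (s : ℂ)) with he
  have hec : Continuous e := by fun_prop
  have hi' : ∀ a b, IntervalIntegrable u volume a b := fun a b =>
    hp.intervalIntegrable (t := -π) (by positivity) (by convert hi using 1; ring) a b
  have hpe : Function.Periodic (fun s => u s * e s) (2 * π) := by
    intro s
    simp only [hp s]
    congr 1
    simp only [he]
    rw [Complex.exp_eq_exp_iff_exists_int]
    refine ⟨-k, ?_⟩
    push_cast; ring
  have hsh : ∫ s in (-π)..π, u (s + h) * e s
      = Complex.exp (Complex.I * k * h) * ∫ s in (-π)..π, u s * e s := by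
    have h1 : ∀ s, u (s + h) * e s = Complex.exp (Complex.I * k * h) * (u (s + h) * e (s + h)) := by
      intro s
      rw [mul_left_comm]
      congr 1
      simp only [he]
      rw [← Complex.exp_add]; congr 1; push_cast; ring
    simp_rw [h1]
    rw [intervalIntegral.integral_const_mul]
    congr 1
    rw [intervalIntegral.integral_comp_add_right (fun s => u s * e s) h]
    have := hpe.intervalIntegral_add_eq (-π + h) (-π)
    rw [show -π + h + 2 * π = π + h by ring, show -π + 2 * π = π by ring] at this
    exact this
  simp_rw [sub_mul]
  rw [intervalIntegral.integral_sub, hsh]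
  · rw [show ∀ a b : ℂ, a * b - b = (a - 1) * b by intros; ring, Complex.normSq_mul]
    have h3 : Complex.normSq (Complex.exp (Complex.I * k * h) - 1) = 2 - 2 * cos (k * h) := by
      rw [show Complex.I * k * h = ((k * h : ℝ) : ℂ) * Complex.I by push_cast; ring,
        Complex.exp_mul_I, ← Complex.ofReal_cos, ← Complex.ofReal_sin, Complex.normSq_apply]
      simp only [Complex.sub_re, Complex.add_re, Complex.mul_re, Complex.ofReal_re, Complex.ofReal_im,
        Complex.I_re, Complex.I_im, Complex.one_re, Complex.sub_im, Complex.add_im, Complex.mul_im,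
        Complex.one_im]
      nlinarith [sin_sq_add_cos_sq (k * h)]
    rw [h3]
    simp only [he]
    ring
  · have := (hi' (-π + h) (π + h)).comp_add_right h
    simp only [add_sub_cancel_right] at this
    exact this.mul_continuousOn hec.continuousOn
  · exact hi.mul_continuousOn hec.continuousOn

lemma shift_E (u : ℝ → E2) (hp : Function.Periodic u (2 * π)) (hu : MemLp u 2 IP) (h : ℝ) (k : ℤ) :
    coefSq (fun t => u (t + h) - u t) k = (2 - 2 * cos (k * h)) * coefSq u k := by
  unfold coefSq
  rw [Finset.mul_sum]
  refine Finset.sum_congr rfl fun j _ => ?_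
  rw [← shift_C]
  · simp
  · intro s; simp [hp s]
  · rw [intervalIntegrable_iff_integrableOn_Ioc_of_le (by linarith [pi_pos])]
    exact (memLp_compC hu j).integrable one_le_two

lemma periodic_lintegral (φ : ℝ → ℝ≥0∞) (hp : Function.Periodic φ (2 * π)) (h : ℝ) :
    ∫⁻ t in Set.Ioc (-π) π, φ (t + h) = ∫⁻ t in Set.Ioc (-π) π, φ t := by
  have h1 : ∫⁻ t in Set.Ioc (-π) π, φ (t + h) = ∫⁻ t in Set.Ioc (-π + h) (π + h), φ t := by
    have := (measurePreserving_add_right volume h).setLIntegral_comp_preimage_emb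
      (measurableEmbedding_addRight h) φ (Set.Ioc (-π + h) (π + h))
    rw [← this]
    congr 2
    ext x; simp
  rw [h1]
  have a1 := isAddFundamentalDomain_Ioc (T := 2 * π) (by positivity) (-π + h) volume
  have a2 := isAddFundamentalDomain_Ioc (T := 2 * π) (by positivity) (-π) volume
  have := a1.setLIntegral_eq a2 φ (by
    rintro ⟨g, hg⟩ x
    obtain ⟨n, rfl⟩ := AddSubgroup.mem_zmultiples_iff.1 hg
    have := hp.zsmul n x
    simpa [AddSubgroup.vadd_def, add_comm] using this)
  rw [show -π + h + 2 * π = π + h by ring, show -π + 2 * π = π by ring] at this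
  exact this

lemma memLp_shift (u : ℝ → E2) (hm : Measurable u) (hp : Function.Periodic u (2 * π))
    (hu : MemLp u 2 IP) (h : ℝ) : MemLp (fun t => u (t + h)) 2 IP := by
  refine ⟨(hm.comp (measurable_add_const h)).aestronglyMeasurable, ?_⟩
  have h2 := hu.2
  rw [eLpNorm_lt_top_iff_lintegral_rpow_enorm_lt_top (by norm_num) (by norm_num)] at h2 ⊢
  rw [periodic_lintegral (fun t => ‖u t‖ₑ ^ (2 : ℝ≥0∞).toReal) (by intro s; simp [hp s]) h]
  exact h2

lemma parseval_shift (u : ℝ → E2) (hm : Measurable u) (hp : Function.Periodic u (2 * π))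
    (hu : MemLp u 2 IP) (h : ℝ) :
    ∑' k : ℤ, ENNReal.ofReal ((2 - 2 * cos (k * h)) * coefSq u k)
      = ENNReal.ofReal (2 * π) * ∫⁻ t in Set.Ioc (-π) π, ‖u (t + h) - u t‖ₑ ^ 2 := by
  rw [← parseval_E (fun t => u (t + h) - u t) ((memLp_shift u hm hp hu h).sub hu)]
  simp_rw [shift_E u hp hu]


lemma ac_ofReal {r : ℝ → ℝ} {a b : ℝ} (h : AbsolutelyContinuousOnInterval r a b) :
    AbsolutelyContinuousOnInterval (fun x => ((r x : ℝ) : ℂ)) a b := by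
  rw [absolutelyContinuousOnInterval_iff] at h ⊢
  intro ε hε
  obtain ⟨δ, hδ, h4⟩ := h ε hε
  refine ⟨δ, hδ, fun E hE hE2 => ?_⟩
  convert h4 E hE hE2 using 2 with i hi
  simp [Complex.dist_eq, Real.dist_eq, ← Complex.ofReal_sub]

lemma ac_primitive {v : ℝ → ℂ} {a b : ℝ} (h : IntervalIntegrable v volume a b) :
    AbsolutelyContinuousOnInterval (fun x => ∫ s in a..x, v s) a b := by
  have hr : IntervalIntegrable (fun s => (v s).re) volume a b :=
    ⟨Complex.reCLM.integrable_comp h.1, Complex.reCLM.integrable_comp h.2⟩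
  have hi : IntervalIntegrable (fun s => (v s).im) volume a b :=
    ⟨Complex.imCLM.integrable_comp h.1, Complex.imCLM.integrable_comp h.2⟩
  have h1 := ac_ofReal (hr.absolutelyContinuousOnInterval_intervalIntegral (c := a) (by simp))
  have h2 := ac_ofReal (hi.absolutelyContinuousOnInterval_intervalIntegral (c := a) (by simp))
  have h2' : AbsolutelyContinuousOnInterval (fun _ : ℝ => Complex.I) a b :=
      (LipschitzWith.const Complex.I).lipschitzOnWith.absolutelyContinuousOnInterval
  have h3 := h1.add (h2'.smul h2)
  rw [absolutelyContinuousOnInterval_iff] at h3 ⊢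
  intro ε hε
  obtain ⟨δ, hδ, h4⟩ := h3 ε hε
  refine ⟨δ, hδ, fun E hE hE2 => ?_⟩
  convert h4 E hE hE2 using 2 with i hi
  have key : ∀ x ∈ Set.uIcc a b, ∫ s in a..x, v s =
      ((fun x => ((∫ s in a..x, (v s).re : ℝ) : ℂ)) +
        ((fun _ : ℝ => Complex.I) • fun x => ((∫ s in a..x, (v s).im : ℝ) : ℂ))) x := by
    intro x hx
    have hvx : IntervalIntegrable v volume a x :=
      h.mono_set (Set.uIcc_subset_uIcc_left hx)
    simp only [Pi.add_apply, smul_eq_mul, Pi.mul_apply]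
    have e1 := Complex.reCLM.intervalIntegral_comp_comm hvx
    have e2 := Complex.imCLM.intervalIntegral_comp_comm hvx
    simp only [Complex.reCLM_apply, Complex.imCLM_apply] at e1 e2
    rw [e1, e2, mul_comm, Complex.re_add_im]
  rw [key _ (hE.1 i hi).1, key _ (hE.1 i hi).2]

lemma deriv_C (u v : ℝ → ℂ) (hac : AbsolutelyContinuousOnInterval u (-π) π)
    (hv : IntervalIntegrable v volume (-π) π) (hd : ∀ᵐ x, HasDerivAt u (v x) x)
    (hper : u π = u (-π)) (k : ℤ) :
    ∫ s in (-π)..π, v s * Complex.exp (-Complex.I * (k : ℂ) * (s : ℂ)) =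
      (Complex.I * k) * ∫ s in (-π)..π, u s * Complex.exp (-Complex.I * (k : ℂ) * (s : ℂ)) := by
  set e : ℝ → ℂ := fun s => Complex.exp (-Complex.I * (k : ℂ) * (s : ℂ)) with he
  have hec : Continuous e := by fun_prop
  have hed : ∀ x, HasDerivAt e (-Complex.I * k * e x) x := by
    intro x
    have h1 : HasDerivAt (fun s : ℝ => -Complex.I * (k : ℂ) * (s : ℂ)) (-Complex.I * k) x := by
      simpa using (Complex.ofRealCLM.hasDerivAt (x := x)).const_mul (-Complex.I * (k : ℂ))
    have := h1.cexp
    simp only [he]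
    convert this using 1
    ring
  have heac : AbsolutelyContinuousOnInterval e (-π) π := by
    have hc1 : ContDiff ℝ 1 e := by
      simp only [he]
      have : ContDiff ℝ 1 (fun s : ℝ => (s : ℂ)) := Complex.ofRealCLM.contDiff
      fun_prop
    obtain ⟨K, hK⟩ := hc1.contDiffOn.exists_lipschitzOnWith (s := Set.uIcc (-π) π) one_ne_zero
      (convex_uIcc _ _) isCompact_uIcc
    exact hK.absolutelyContinuousOnInterval
  have huc := hac.continuousOn
  set w : ℝ → ℂ := fun s => (-Complex.I * k) * (u s * e s) + v s * e s with hw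
  have i1 : IntervalIntegrable (fun s => u s * e s) volume (-π) π :=
    (huc.mul hec.continuousOn).intervalIntegrable
  have i2 : IntervalIntegrable (fun s => v s * e s) volume (-π) π :=
    hv.mul_continuousOn hec.continuousOn
  have iw : IntervalIntegrable w volume (-π) π := (i1.const_mul _).add i2
  have wac := ac_primitive iw
  have gac := (heac.smul hac).sub wac
  obtain ⟨C, hC⟩ := gac.const_of_ae_hasDerivAt_zero (by
    filter_upwards [hd, iw.ae_hasDerivAt_integral] with x h1 h2 h3
    convert! ((hed x).smul h1).sub (h2 h3 (-π) (by simp)) using 1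
    simp only [hw, smul_eq_mul]; ring)
  have c1 := hC (-π) (by simp)
  have c2 := hC π (by simp)
  have hee : e π = e (-π) := by
    simp only [he]
    rw [Complex.exp_eq_exp_iff_exists_int]
    refine ⟨-k, ?_⟩
    push_cast; ring
  have hz : ∫ s in (-π)..π, w s = 0 := by
    simp only [Pi.sub_apply, smul_eq_mul, Pi.mul_apply, intervalIntegral.integral_same] at c1 c2
    rw [hee, hper] at c2
    linear_combination c1 - c2
  rw [hw, intervalIntegral.integral_add (i1.const_mul _) i2,
    intervalIntegral.integral_const_mul] at hz
  linear_combination hz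

lemma deriv_E (U V : ℝ → E2) (hV : LocallyIntegrable V)
    (hUV : ∀ a b : ℝ, a ≤ b → U b - U a = ∫ u in a..b, V u)
    (hd : ∀ᵐ x, HasDerivAt U (V x) x) (hper : U π = U (-π)) (k : ℤ) :
    coefSq V k = (k : ℝ) ^ 2 * coefSq U k := by
  have hpi := pi_pos
  unfold coefSq
  rw [Finset.mul_sum]
  refine Finset.sum_congr rfl fun j _ => ?_
  let P : E2 →L[ℝ] ℂ := Complex.ofRealCLM.comp (EuclideanSpace.proj (𝕜 := ℝ) j)
  have hP : ∀ v : E2, P v = ((v j : ℝ) : ℂ) := fun v => rfl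
  have hVi : ∀ a b, IntervalIntegrable V volume a b := fun a b =>
    intervalIntegrable_iff.mpr <|
      (hV.integrableOn_isCompact isCompact_uIcc).mono_set Set.uIoc_subset_uIcc
  have hPi : IntervalIntegrable (fun s => P (V s)) volume (-π) π :=
    ⟨P.integrable_comp (hVi (-π) π).1, P.integrable_comp (hVi (-π) π).2⟩
  have hac : AbsolutelyContinuousOnInterval (fun s => P (U s)) (-π) π := by
    have h1 := ac_primitive hPi
    have h2 : AbsolutelyContinuousOnInterval (fun _ : ℝ => P (U (-π))) (-π) π :=
      (LipschitzWith.const (P (U (-π)))).lipschitzOnWith.absolutelyContinuousOnInterval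
    have h3 := h2.add h1
    rw [absolutelyContinuousOnInterval_iff] at h3 ⊢
    intro ε hε
    obtain ⟨δ, hδ, h4⟩ := h3 ε hε
    refine ⟨δ, hδ, fun E hE hE2 => ?_⟩
    convert h4 E hE hE2 using 2 with i hi
    have key : ∀ x ∈ Set.uIcc (-π) π, P (U x) =
        ((fun _ : ℝ => P (U (-π))) + fun x => ∫ s in (-π)..x, P (V s)) x := by
      intro x hx
      rw [Set.uIcc_of_le (by linarith)] at hx
      simp only [Pi.add_apply]
      rw [P.intervalIntegral_comp_comm (hVi _ _), ← hUV _ _ hx.1, map_sub]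
      ring
    rw [key _ (hE.1 i hi).1, key _ (hE.1 i hi).2]
  have := deriv_C (fun s => P (U s)) (fun s => P (V s)) hac hPi
    (by filter_upwards [hd] with x hx
        exact P.hasFDerivAt.comp_hasDerivAt x hx) (by rw [hper]) k
  simp only [hP] at this
  rw [this, Complex.normSq_mul]
  congr 1
  simp [Complex.normSq_apply, sq]

lemma scaling (θ c : ℝ) (hc : 0 < c) (φ : ℝ → ℝ≥0∞) (hφ : Measurable φ) :
    ∫⁻ h in Set.Ioi 0, φ (c * h) * W θ h
      = ENNReal.ofReal (c ^ (2 * θ)) * ∫⁻ h in Set.Ioi 0, φ h * W θ h := by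
  have h1 : ∀ h ∈ Set.Ioi (0 : ℝ), φ (c * h) * W θ h
      = ENNReal.ofReal (c ^ (1 + 2 * θ)) * (φ (c * h) * W θ (c * h)) := by
    intro h hh
    have hh : 0 < h := hh
    rw [mul_left_comm]
    congr 1
    unfold W
    rw [← ENNReal.ofReal_mul (by positivity), mul_rpow hc.le hh.le, ← mul_assoc, ← rpow_add hc]
    simp
  rw [setLIntegral_congr_fun measurableSet_Ioi h1]
  have hm : Measurable fun h => φ h * W θ h := hφ.mul (measurable_W θ)
  rw [lintegral_const_mul' _ _ ENNReal.ofReal_ne_top]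
  have h2 : ∫⁻ h in Set.Ioi 0, φ (c * h) * W θ (c * h)
      = ENNReal.ofReal c⁻¹ * ∫⁻ h in Set.Ioi 0, φ h * W θ h := by
    have e : MeasurableEmbedding (fun x : ℝ => c * x) :=
      (Homeomorph.mulLeft₀ c hc.ne').measurableEmbedding
    have h3 := Real.map_volume_mul_left hc.ne'
    have h4 : (volume.map (fun x : ℝ => c * x)).restrict (Set.Ioi 0)
      = (volume.restrict (Set.Ioi 0)).map (fun x : ℝ => c * x) := by
      rw [e.restrict_map]
      congr 2
      ext x; simp [hc]
    have h5 : ∫⁻ h in Set.Ioi 0, φ (c * h) * W θ (c * h) =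
        ∫⁻ h, φ h * W θ h ∂((volume.map (fun x : ℝ => c * x)).restrict (Set.Ioi 0)) := by
      rw [h4, e.lintegral_map]
    rw [h5, h3, Measure.restrict_smul, lintegral_smul_measure, abs_of_pos (by positivity)]
    rfl
  rw [h2, ← mul_assoc, ← ENNReal.ofReal_mul (by positivity)]
  congr 2
  rw [add_comm, rpow_add hc, rpow_one, mul_assoc, mul_inv_cancel₀ hc.ne', mul_one]

def Bc (θ : ℝ) : ℝ≥0∞ := ∫⁻ h in Set.Ioi 0, ENNReal.ofReal (min 1 h ^ 2) * W θ h

def cc (θ : ℝ) : ℝ≥0∞ := ∫⁻ h in Set.Ioi 0, ENNReal.ofReal (2 - 2 * cos h) * W θ h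

lemma Bc_lt_top (θ : ℝ) (h0 : 0 < θ) (h1 : θ < 1) : Bc θ < ∞ := by
  unfold Bc
  rw [← Set.Ioc_union_Ioi_eq_Ioi zero_le_one]
  refine (lintegral_union_le _ _ _).trans_lt (ENNReal.add_lt_top.2 ⟨?_, ?_⟩)
  · have hi : IntegrableOn (fun h : ℝ => h ^ (1 - 2 * θ)) (Set.Ioc 0 1) := by
      have := intervalIntegral.intervalIntegrable_rpow' (a := 0) (b := 1) (r := 1 - 2 * θ) (by linarith)
      exact (intervalIntegrable_iff_integrableOn_Ioc_of_le zero_le_one).1 this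
    refine lt_of_le_of_lt ?_ hi.2
    refine setLIntegral_mono' measurableSet_Ioc fun h hh => ?_
    rw [min_eq_right hh.2, W, ← ENNReal.ofReal_mul (by positivity), ← ofReal_norm]
    refine ENNReal.ofReal_le_ofReal ((le_of_eq ?_).trans (le_abs_self _))
    rw [← rpow_natCast, ← rpow_add hh.1]
    congr 1; push_cast; ring
  · have hi : IntegrableOn (fun h : ℝ => h ^ (-1 - 2 * θ)) (Set.Ioi 1) :=
      integrableOn_Ioi_rpow_of_lt (by linarith) one_pos
    refine lt_of_le_of_lt ?_ hi.2
    refine setLIntegral_mono' measurableSet_Ioi fun h hh => ?_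
    rw [min_eq_left (le_of_lt hh), W, ← ofReal_norm]
    simp only [one_pow, ENNReal.ofReal_one, one_mul]
    exact ENNReal.ofReal_le_ofReal (le_abs_self _)

lemma cos_bound (h : ℝ) : 2 - 2 * cos h ≤ 4 * min 1 h ^ 2 := by
  rcases le_total 1 h with h1 | h1
  · rw [min_eq_left h1]; linarith [neg_one_le_cos h]
  · rw [min_eq_right h1]; nlinarith [one_sub_sq_div_two_le_cos (x := h)]

lemma cc_lt_top (θ : ℝ) (h0 : 0 < θ) (h1 : θ < 1) : cc θ < ∞ := by
  have : cc θ ≤ 4 * Bc θ := by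
    unfold cc Bc
    rw [← lintegral_const_mul' _ _ (by norm_num)]
    refine setLIntegral_mono' measurableSet_Ioi fun h _ => ?_
    rw [← mul_assoc]
    gcongr
    rw [show (4 : ℝ≥0∞) = ENNReal.ofReal 4 by norm_num, ← ENNReal.ofReal_mul (by norm_num)]
    exact ENNReal.ofReal_le_ofReal (cos_bound h)
  exact this.trans_lt (ENNReal.mul_lt_top (by norm_num) (Bc_lt_top θ h0 h1))

lemma cc_ne_zero (θ : ℝ) : cc θ ≠ 0 := by
  unfold cc
  have hm : Measurable fun h => ENNReal.ofReal (2 - 2 * cos h) * W θ h :=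
    Measurable.mul (by fun_prop) (measurable_W θ)
  rw [← pos_iff_ne_zero, setLIntegral_pos_iff hm]
  refine lt_of_lt_of_le ?_ (measure_mono (μ := volume) (s := Set.Ioo (0 : ℝ) 1) ?_)
  · simp
  · intro h hh
    refine ⟨?_, hh.1⟩
    rw [Function.mem_support]
    have : cos h < 1 := by
      have := cos_lt_cos_of_nonneg_of_le_pi (x := 0) (y := h) le_rfl (by linarith [hh.2, pi_gt_three]) hh.1
      simpa using this
    have h2 : 0 < h ^ (-1 - 2 * θ) := rpow_pos_of_pos hh.1 _
    simp only [W, ne_eq, mul_eq_zero, ENNReal.ofReal_eq_zero, not_or, not_le]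
    exact ⟨by linarith, h2⟩

lemma sobSummand_nonneg (σ : ℝ) (g : ℝ → E2) (k : ℤ) : 0 ≤ sobSummand σ g k := by
  unfold sobSummand
  split_ifs
  · exact le_rfl
  · exact mul_nonneg (by positivity) (coefSq_nonneg _ _)

lemma cos_int (θ : ℝ) (k : ℤ) (hk : k ≠ 0) :
    ∫⁻ h in Set.Ioi 0, ENNReal.ofReal (2 - 2 * cos (k * h)) * W θ h
      = ENNReal.ofReal (|(k : ℝ)| ^ (2 * θ)) * cc θ := by
  have hk' : 0 < |(k : ℝ)| := abs_pos.2 (by exact_mod_cast hk)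
  rw [cc, ← scaling θ _ hk' (fun h => ENNReal.ofReal (2 - 2 * cos h)) (by fun_prop)]
  refine lintegral_congr fun h => ?_
  congr 3
  rcases abs_choice (k : ℝ) with h1 | h1 <;> rw [h1]
  rw [neg_mul, cos_neg]

def Jc (θ : ℝ) (u : ℝ → E2) : ℝ≥0∞ :=
  ∫⁻ h in Set.Ioi 0, (∫⁻ t in Set.Ioc (-π) π, ‖u (t + h) - u t‖ₑ ^ 2) * W θ h

def Nc (σ : ℝ) (u : ℝ → E2) : ℝ≥0∞ := ∑' k : ℤ, ENNReal.ofReal (sobSummand σ u k)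

lemma Jc_eq (θ : ℝ) (u : ℝ → E2) (hm : Measurable u) (hp : Function.Periodic u (2 * π))
    (hu : MemLp u 2 IP) : ENNReal.ofReal (2 * π) * Jc θ u = cc θ * Nc θ u := by
  unfold Jc Nc
  rw [← lintegral_const_mul' _ _ ENNReal.ofReal_ne_top]
  simp_rw [← mul_assoc, ← parseval_shift u hm hp hu]
  simp_rw [← ENNReal.tsum_mul_right, ← ENNReal.tsum_mul_left]
  rw [lintegral_tsum]
  · refine tsum_congr fun k => ?_
    have hnn : ∀ x : ℝ, 0 ≤ 2 - 2 * cos x := fun x => by linarith [cos_le_one x]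
    simp_rw [ENNReal.ofReal_mul (hnn _), mul_right_comm _ (ENNReal.ofReal (coefSq u k))]
    rw [lintegral_mul_const' _ _ (by simp)]
    by_cases hk : k = 0
    · simp [hk, sobSummand]
    · rw [cos_int θ k hk, sobSummand, if_neg hk, ENNReal.ofReal_mul (by positivity)]
      ring
  · intro k
    exact ((Measurable.mul (by fun_prop) (measurable_W θ))).aemeasurable


lemma core_step (θ : ℝ) (h0 : 0 < θ) (f g : ℝ → E2) (t γ : ℝ) (hγ : 0 < γ)
    (hgi : ∀ a b, IntervalIntegrable g volume a b)
    (hfg : ∀ a b : ℝ, a ≤ b → f b - f a = ∫ u in a..b, g u)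
    (hG : ∫⁻ h in Set.Ioi 0, ‖g (t + h) - g t‖ₑ ^ 2 * W θ h ≤ ENNReal.ofReal (γ ^ 2))
    (h : ℝ) (hh : 0 < h) : ‖f (t + h) - f t - h • g t‖ ≤ γ * h ^ (1 + θ) := by
  have e1 : f (t + h) - f t - h • g t = ∫ u in (0 : ℝ)..h, (g (t + u) - g t) := by
    rw [hfg t (t + h) (by linarith), intervalIntegral.integral_sub]
    · rw [intervalIntegral.integral_comp_add_left]; simp
    · have := (hgi (t + 0) (t + h)).comp_add_left t
      simpa using this
    · exact intervalIntegrable_const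
  have hP : 0 < h ^ (1 + θ) := by positivity
  set ε : ℝ := h ^ (1 + θ) / γ with hε
  have hεp : 0 < ε := by positivity
  have e2 : ‖f (t + h) - f t - h • g t‖ₑ ≤ ENNReal.ofReal (γ * h ^ (1 + θ)) := by
    rw [e1, intervalIntegral.integral_of_le hh.le]
    refine (enorm_integral_le_lintegral_enorm _).trans ?_
    have pw : ∀ u ∈ Set.Ioc 0 h, ‖g (t + u) - g t‖ₑ ≤
        ENNReal.ofReal (ε / 2) * (‖g (t + u) - g t‖ₑ ^ 2 * W θ u)
          + ENNReal.ofReal (h ^ (1 + 2 * θ) / (2 * ε)) := by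
      intro u hu
      have hu0 : 0 < u := hu.1
      have hw : 0 < u ^ (-1 - 2 * θ) := by positivity
      rw [W, ← ofReal_norm, ← ENNReal.ofReal_pow (norm_nonneg _), ← ENNReal.ofReal_mul (by positivity),
        ← ENNReal.ofReal_mul (by positivity), ← ENNReal.ofReal_add (by positivity) (by positivity)]
      refine ENNReal.ofReal_le_ofReal ?_
      set x := ‖g (t + u) - g t‖
      set w := u ^ (-1 - 2 * θ) with hwd
      have h1 : w⁻¹ ≤ h ^ (1 + 2 * θ) := by
        rw [hwd, ← rpow_neg hu0.le]
        rw [show -(-1 - 2 * θ) = 1 + 2 * θ by ring]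
        exact rpow_le_rpow hu0.le hu.2 (by linarith)
      have h2 : x ≤ ε / 2 * (x ^ 2 * w) + w⁻¹ / (2 * ε) := by
        have : ε / 2 * (x ^ 2 * w) + w⁻¹ / (2 * ε) - x = (ε * w * x - 1) ^ 2 / (2 * ε * w) := by
          field_simp; ring
        have h3 : 0 ≤ (ε * w * x - 1) ^ 2 / (2 * ε * w) := by positivity
        linarith
      have h4 : w⁻¹ / (2 * ε) ≤ h ^ (1 + 2 * θ) / (2 * ε) := by gcongr
      linarith
    refine (setLIntegral_mono' measurableSet_Ioc pw).trans ?_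
    rw [lintegral_add_right _ measurable_const, lintegral_const_mul' _ _ ENNReal.ofReal_ne_top,
      setLIntegral_const, Real.volume_Ioc, sub_zero]
    have h5 : ∫⁻ u in Set.Ioc 0 h, ‖g (t + u) - g t‖ₑ ^ 2 * W θ u ≤ ENNReal.ofReal (γ ^ 2) :=
      (lintegral_mono_set Set.Ioc_subset_Ioi_self).trans hG
    refine (add_le_add (mul_le_mul' le_rfl h5) le_rfl).trans ?_
    rw [← ENNReal.ofReal_mul (by positivity), ← ENNReal.ofReal_mul (by positivity),
      ← ENNReal.ofReal_add (by positivity) (by positivity)]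
    refine ENNReal.ofReal_le_ofReal (le_of_eq ?_)
    have h6 : h ^ (1 + 2 * θ) * h = h ^ (1 + θ) * h ^ (1 + θ) := by
      rw [← rpow_add hh, ← rpow_add_one hh.ne']; congr 1; ring
    have h7 : h ^ (1 + 2 * θ) / (2 * ε) * h = (h ^ (1 + 2 * θ) * h) / (2 * ε) := by ring
    rw [h7, h6, hε]
    field_simp
    ring
  rw [← ofReal_norm] at e2
  exact (ENNReal.ofReal_le_ofReal_iff (by positivity)).1 e2

lemma core (θ : ℝ) (h0 : 0 < θ) (h1 : θ < 1) (f g : ℝ → E2) (t M : ℝ) (hM : 0 < M)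
    (hf : ∀ s, ‖f s‖ ≤ M)
    (hgi : ∀ a b, IntervalIntegrable g volume a b)
    (hfg : ∀ a b : ℝ, a ≤ b → f b - f a = ∫ u in a..b, g u) :
    (∫⁻ h in Set.Ioi 0, ‖f (t + h) - f t‖ₑ ^ 2 * W θ h) * ‖g t‖ₑ ^ 2 ≤
      (144 * Bc θ * ENNReal.ofReal (M ^ 2)) *
        ∫⁻ h in Set.Ioi 0, ‖g (t + h) - g t‖ₑ ^ 2 * W θ h := by
  set G2 := ∫⁻ h in Set.Ioi 0, ‖g (t + h) - g t‖ₑ ^ 2 * W θ h with hG2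
  have hB := Bc_lt_top θ h0 h1
  have hBne : Bc θ ≠ 0 := by
    intro h
    have h2 : cc θ ≤ 4 * Bc θ := by
      unfold cc Bc
      rw [← lintegral_const_mul' _ _ (by norm_num)]
      refine setLIntegral_mono' measurableSet_Ioi fun h _ => ?_
      rw [← mul_assoc]
      gcongr
      rw [show (4 : ℝ≥0∞) = ENNReal.ofReal 4 by norm_num, ← ENNReal.ofReal_mul (by norm_num)]
      exact ENNReal.ofReal_le_ofReal (cos_bound h)
    rw [h] at h2
    exact cc_ne_zero θ (by simpa using h2)
  -- the main step
  have main : ∀ γ : ℝ, 0 < γ → G2 ≤ ENNReal.ofReal (γ ^ 2) →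
      (∫⁻ h in Set.Ioi 0, ‖f (t + h) - f t‖ₑ ^ 2 * W θ h) * ‖g t‖ₑ ^ 2 ≤
      (144 * Bc θ * ENNReal.ofReal (M ^ 2)) * ENNReal.ofReal (γ ^ 2) := by
    intro γ hγ hG
    have st := core_step θ h0 f g t γ hγ hgi hfg hG
    set r : ℝ := (M / γ) ^ (1 / (1 + θ)) with hr
    have hr0 : 0 < r := by positivity
    have hrp : γ * r ^ (1 + θ) = M := by
      rw [hr, ← rpow_mul (by positivity), one_div, inv_mul_cancel₀ (by linarith), rpow_one]
      field_simp
    have hg : ‖g t‖ ≤ 3 * M / r := by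
      have a1 := st r hr0
      rw [hrp] at a1
      have a2 : ‖r • g t‖ ≤ 3 * M := by
        have : r • g t = f (t + r) - f t - (f (t + r) - f t - r • g t) := by abel
        rw [this]
        refine (norm_sub_le _ _).trans ?_
        have := (norm_sub_le (f (t + r)) (f t)).trans (add_le_add (hf _) (hf _))
        linarith
      rw [norm_smul, Real.norm_eq_abs, abs_of_pos hr0] at a2
      rw [le_div_iff₀ hr0]; linarith
    have hd : ∀ h, 0 < h → ‖f (t + h) - f t‖ ≤ 4 * M * min 1 (r⁻¹ * h) := by
      intro h hh
      rcases le_total 1 (r⁻¹ * h) with hc | hc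
      · rw [min_eq_left hc]
        have := (norm_sub_le (f (t + h)) (f t)).trans (add_le_add (hf _) (hf _))
        linarith
      · rw [min_eq_right hc]
        have hhr : h ≤ r := by
          rw [inv_mul_eq_div, div_le_one hr0] at hc; exact hc
        have a1 := st h hh
        have a3 : γ * h ^ (1 + θ) ≤ M * (r⁻¹ * h) := by
          have : h ^ (1 + θ) ≤ r ^ (1 + θ) * (r⁻¹ * h) := by
            rw [rpow_add hh, rpow_add hr0, rpow_one, rpow_one]
            have : h ^ θ ≤ r ^ θ := rpow_le_rpow hh.le hhr h0.le
            calc h * h ^ θ ≤ h * r ^ θ := by gcongr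
              _ = r * r ^ θ * (r⁻¹ * h) := by field_simp
          calc γ * h ^ (1 + θ) ≤ γ * (r ^ (1 + θ) * (r⁻¹ * h)) := by gcongr
            _ = M * (r⁻¹ * h) := by rw [← mul_assoc, hrp]
        have a4 : ‖h • g t‖ ≤ 3 * M * (r⁻¹ * h) := by
          rw [norm_smul, Real.norm_eq_abs, abs_of_pos hh]
          calc h * ‖g t‖ ≤ h * (3 * M / r) := by gcongr
            _ = _ := by field_simp
        have : f (t + h) - f t = (f (t + h) - f t - h • g t) + h • g t := by abel
        rw [this]
        refine (norm_add_le _ _).trans ?_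
        linarith
    have hint : ∫⁻ h in Set.Ioi 0, ‖f (t + h) - f t‖ₑ ^ 2 * W θ h ≤
        ENNReal.ofReal (16 * M ^ 2) * (ENNReal.ofReal (r⁻¹ ^ (2 * θ)) * Bc θ) := by
      rw [Bc, ← scaling θ r⁻¹ (by positivity) (fun h => ENNReal.ofReal (min 1 h ^ 2)) (by fun_prop),
        ← lintegral_const_mul' _ _ ENNReal.ofReal_ne_top]
      refine setLIntegral_mono' measurableSet_Ioi fun h hh => ?_
      rw [← mul_assoc]
      gcongr
      rw [← ofReal_norm, ← ENNReal.ofReal_pow (norm_nonneg _), ← ENNReal.ofReal_mul (by positivity)]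
      refine ENNReal.ofReal_le_ofReal ?_
      calc _ ≤ (4 * M * min 1 (r⁻¹ * h)) ^ 2 := by gcongr; exact hd h hh
        _ = _ := by ring
    have hg2 : ‖g t‖ₑ ^ 2 ≤ ENNReal.ofReal (9 * M ^ 2 / r ^ 2) := by
      rw [← ofReal_norm, ← ENNReal.ofReal_pow (norm_nonneg _)]
      refine ENNReal.ofReal_le_ofReal ?_
      calc _ ≤ (3 * M / r) ^ 2 := by gcongr
        _ = _ := by ring
    refine (mul_le_mul' hint hg2).trans (le_of_eq ?_)
    have e144 : (144 : ℝ≥0∞) = ENNReal.ofReal 144 := by norm_num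
    rw [e144]
    have : ENNReal.ofReal (16 * M ^ 2) * (ENNReal.ofReal (r⁻¹ ^ (2 * θ)) * Bc θ)
        * ENNReal.ofReal (9 * M ^ 2 / r ^ 2) =
        (ENNReal.ofReal (16 * M ^ 2) * ENNReal.ofReal (r⁻¹ ^ (2 * θ))
          * ENNReal.ofReal (9 * M ^ 2 / r ^ 2)) * Bc θ := by ring
    rw [this]
    have : ENNReal.ofReal 144 * Bc θ * ENNReal.ofReal (M ^ 2) * ENNReal.ofReal (γ ^ 2) =
        (ENNReal.ofReal 144 * ENNReal.ofReal (M ^ 2) * ENNReal.ofReal (γ ^ 2)) * Bc θ := by ring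
    rw [this]
    congr 1
    rw [← ENNReal.ofReal_mul (by positivity), ← ENNReal.ofReal_mul (by positivity),
      ← ENNReal.ofReal_mul (by positivity), ← ENNReal.ofReal_mul (by positivity)]
    congr 1
    have a5 : γ ^ 2 * (r ^ 2 * r ^ (2 * θ)) = M ^ 2 := by
      rw [← hrp, mul_pow]
      congr 1
      rw [← rpow_natCast, ← rpow_natCast, ← rpow_add hr0, ← rpow_mul hr0.le]
      congr 1; push_cast; ring
    rw [inv_rpow hr0.le]
    have hrr : 0 < r ^ (2 * θ) := by positivity
    field_simp
    linear_combination (-144) * a5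
  -- conclusion
  by_cases hGt : G2 = ∞
  · rw [hGt, ENNReal.mul_top]
    · exact le_top
    · simp only [ne_eq, mul_eq_zero, not_or, ENNReal.ofReal_eq_zero, not_le]
      exact ⟨⟨by norm_num, hBne⟩, by positivity⟩
  · have hK : 144 * Bc θ * ENNReal.ofReal (M ^ 2) ≠ ∞ :=
      ENNReal.mul_ne_top (ENNReal.mul_ne_top (by norm_num) hB.ne) ENNReal.ofReal_ne_top
    have key : ∀ δ : ℝ, 0 < δ →
      (∫⁻ h in Set.Ioi 0, ‖f (t + h) - f t‖ₑ ^ 2 * W θ h) * ‖g t‖ₑ ^ 2 ≤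
      (144 * Bc θ * ENNReal.ofReal (M ^ 2)) * (G2 + ENNReal.ofReal δ) := by
      intro δ hδ
      have hs : G2 + ENNReal.ofReal δ = ENNReal.ofReal (Real.sqrt (G2.toReal + δ) ^ 2) := by
        rw [Real.sq_sqrt (by positivity), ENNReal.ofReal_add (by positivity) hδ.le,
          ENNReal.ofReal_toReal hGt]
      rw [hs]
      refine main _ (by positivity) ?_
      rw [← hs]
      exact le_self_add
    have lim : Tendsto (fun δ : ℝ => (144 * Bc θ * ENNReal.ofReal (M ^ 2)) * (G2 + ENNReal.ofReal δ))
        (𝓝[>] 0) (𝓝 ((144 * Bc θ * ENNReal.ofReal (M ^ 2)) * (G2 + ENNReal.ofReal 0))) := by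
      refine ENNReal.Tendsto.const_mul ?_ (Or.inr hK)
      refine Tendsto.add tendsto_const_nhds ?_
      exact (ENNReal.continuous_ofReal.tendsto 0).mono_left nhdsWithin_le_nhds
    have := ge_of_tendsto lim (by
      filter_upwards [self_mem_nhdsWithin] with δ hδ using key δ hδ)
    simpa using this

/-- `L²` bound for the derivative by Fatou. -/
lemma fatou_L2 (f g : ℝ → E2) (hfc : Continuous f) (hp : Function.Periodic f (2 * π))
    (hd : ∀ᵐ x, HasDerivAt f (g x) x) :
    ENNReal.ofReal (2 * π) * ∫⁻ t in Set.Ioc (-π) π, ‖g t‖ₑ ^ 2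
      ≤ ∑' k : ℤ, ENNReal.ofReal ((k : ℝ) ^ 2 * coefSq f k) := by
  have hu : MemLp f 2 IP := by
    obtain ⟨C, hC⟩ := isCompact_Icc.exists_bound_of_continuousOn (s := Set.Icc (-π) π)
      (f := f) hfc.continuousOn
    refine MemLp.of_bound hfc.aestronglyMeasurable C ?_
    rw [ae_restrict_iff' measurableSet_Ioc]
    exact Eventually.of_forall fun x hx => hC x ⟨hx.1.le, hx.2⟩
  let a : ℕ → ℝ := fun n => 1 / ((n : ℝ) + 1)
  have ha : ∀ n, 0 < a n := fun n => by positivity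
  let φ : ℕ → ℝ → ℝ≥0∞ := fun n t =>
    ENNReal.ofReal ((a n)⁻¹ ^ 2) * ‖f (t + a n) - f t‖ₑ ^ 2
  have hφm : ∀ n, Measurable (φ n) := fun n => by
    apply Measurable.const_mul
    exact (Continuous.enorm (by fun_prop)).measurable.pow_const 2
  have hlim : ∀ᵐ t, Tendsto (fun n => φ n t) atTop (𝓝 (‖g t‖ₑ ^ 2)) := by
    filter_upwards [hd] with t ht
    have h1 := ht.tendsto_slope_zero
    have h2 : Tendsto a atTop (𝓝[≠] 0) := by
      refine tendsto_nhdsWithin_iff.2 ⟨tendsto_one_div_add_atTop_nhds_zero_nat, ?_⟩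
      exact Eventually.of_forall fun n => (ha n).ne'
    have h3 := h1.comp h2
    have h4 := ((continuous_enorm.tendsto _).comp h3)
    have h5 := ((ENNReal.continuous_pow 2).tendsto _).comp h4
    refine h5.congr fun n => ?_
    simp only [Function.comp, φ]
    rw [enorm_smul, mul_pow, ENNReal.ofReal_pow (by have := ha n; positivity),
      Real.enorm_eq_ofReal (by have := ha n; positivity)]
  have hfat : ∫⁻ t in Set.Ioc (-π) π, ‖g t‖ₑ ^ 2 ≤
      liminf (fun n => ∫⁻ t in Set.Ioc (-π) π, φ n t) atTop := by
    refine le_trans (le_of_eq ?_) (lintegral_liminf_le hφm)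
    refine lintegral_congr_ae (ae_restrict_of_ae ?_)
    filter_upwards [hlim] with t ht
    exact ht.liminf_eq.symm
  have hb : ∀ n, ∫⁻ t in Set.Ioc (-π) π, φ n t ≤
      (ENNReal.ofReal (2 * π))⁻¹ * ∑' k : ℤ, ENNReal.ofReal ((k : ℝ) ^ 2 * coefSq f k) := by
    intro n
    have h1 := parseval_shift f hfc.measurable hp hu (a n)
    have hpz : ENNReal.ofReal (2 * π) ≠ 0 := by simp [pi_pos]
    have h2 : ∫⁻ t in Set.Ioc (-π) π, ‖f (t + a n) - f t‖ₑ ^ 2 =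
        (ENNReal.ofReal (2 * π))⁻¹ *
          ∑' k : ℤ, ENNReal.ofReal ((2 - 2 * cos (k * a n)) * coefSq f k) := by
      rw [h1, ← mul_assoc, ENNReal.inv_mul_cancel hpz ENNReal.ofReal_ne_top, one_mul]
    simp only [φ]
    rw [lintegral_const_mul' _ _ ENNReal.ofReal_ne_top, h2, mul_left_comm, ← ENNReal.tsum_mul_left]
    gcongr with k
    rw [← ENNReal.ofReal_mul (by positivity)]
    refine ENNReal.ofReal_le_ofReal ?_
    rw [← mul_assoc]
    refine mul_le_mul_of_nonneg_right ?_ (coefSq_nonneg _ _)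
    have h3 := one_sub_sq_div_two_le_cos (x := k * a n)
    have h4 : 2 - 2 * cos (k * a n) ≤ (k * a n) ^ 2 := by linarith
    have := ha n
    calc (a n)⁻¹ ^ 2 * (2 - 2 * cos (k * a n)) ≤ (a n)⁻¹ ^ 2 * (k * a n) ^ 2 := by gcongr
      _ = (k : ℝ) ^ 2 := by field_simp
  have hpz : ENNReal.ofReal (2 * π) ≠ 0 := by simp [pi_pos]
  calc _ ≤ ENNReal.ofReal (2 * π) * ((ENNReal.ofReal (2 * π))⁻¹ *
        ∑' k : ℤ, ENNReal.ofReal ((k : ℝ) ^ 2 * coefSq f k)) := by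
        gcongr
        exact hfat.trans (liminf_le_of_le (by isBoundedDefault) fun b hb' => by
          obtain ⟨n, hn⟩ := hb'.exists
          exact hn.trans (hb n))
    _ = _ := by
      rw [← mul_assoc, ENNReal.mul_inv_cancel hpz ENNReal.ofReal_ne_top, one_mul]


/-- rank-one map `v ↦ (f·v/|f|) f` -/
def Qm (f v : E2) : E2 := (⟪f, v⟫ / ‖f‖) • f

lemma Qm_norm (f v : E2) : ‖Qm f v‖ ≤ ‖f‖ * ‖v‖ := by
  unfold Qm
  rw [norm_smul, Real.norm_eq_abs, abs_div, abs_norm]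
  rcases eq_or_ne ‖f‖ 0 with h | h
  · simp [h]
  · have := abs_real_inner_le_norm f v
    rw [div_mul_cancel₀ _ h]; exact this

lemma Qm_sub (f v w : E2) : Qm f (v - w) = Qm f v - Qm f w := by
  unfold Qm
  rw [inner_sub_right, sub_div, sub_smul]

lemma Qm_diff (f₁ f₂ v : E2) (h1 : 0 < ‖f₁‖) (h2 : 0 < ‖f₂‖) :
    ‖Qm f₂ v - Qm f₁ v‖ ≤ 3 * ‖f₂ - f₁‖ * ‖v‖ := by
  have e : Qm f₂ v - Qm f₁ v = (⟪f₂, v⟫ / ‖f₂‖) • (f₂ - f₁)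
      + (⟪(‖f₁‖ / ‖f₂‖) • f₂ - f₁, v⟫ / ‖f₁‖) • f₁ := by
    unfold Qm
    rw [inner_sub_left, inner_smul_left, smul_sub]
    simp only [conj_trivial]
    have : (‖f₁‖ / ‖f₂‖ * ⟪f₂, v⟫ - ⟪f₁, v⟫) / ‖f₁‖
        = ⟪f₂, v⟫ / ‖f₂‖ - ⟪f₁, v⟫ / ‖f₁‖ := by field_simp
    rw [this, sub_smul]
    abel
  rw [e]
  refine (norm_add_le _ _).trans ?_
  have a1 : ‖(⟪f₂, v⟫ / ‖f₂‖) • (f₂ - f₁)‖ ≤ ‖v‖ * ‖f₂ - f₁‖ := by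
    rw [norm_smul, Real.norm_eq_abs, abs_div, abs_norm]
    gcongr
    rw [div_le_iff₀ h2, mul_comm]
    exact abs_real_inner_le_norm f₂ v
  have a2 : ‖(⟪(‖f₁‖ / ‖f₂‖) • f₂ - f₁, v⟫ / ‖f₁‖) • f₁‖ ≤ (2 * ‖f₂ - f₁‖) * ‖v‖ := by
    rw [norm_smul, Real.norm_eq_abs, abs_div, abs_norm, div_mul_cancel₀ _ h1.ne']
    refine (abs_real_inner_le_norm _ _).trans ?_
    gcongr
    have : (‖f₁‖ / ‖f₂‖) • f₂ - f₁ = ((‖f₁‖ - ‖f₂‖) / ‖f₂‖) • f₂ + (f₂ - f₁) := by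
      rw [sub_div, div_self h2.ne', sub_smul, one_smul]; abel
    rw [this]
    refine (norm_add_le _ _).trans ?_
    rw [norm_smul, Real.norm_eq_abs, abs_div, abs_norm, div_mul_cancel₀ _ h2.ne']
    have := abs_norm_sub_norm_le f₁ f₂
    rw [norm_sub_rev] at this
    linarith
  linarith

lemma diff_bound (f₁ f₂ g₁ g₂ : E2) (a₁ a₂ b₁ b₂ c₁ c₂ μ M m : ℝ) (hμ : 0 < μ) (hM : 0 < M)
    (hf1 : 0 < ‖f₁‖) (hf2 : 0 < ‖f₂‖) (hf1' : ‖f₁‖ ≤ M) (hf2' : ‖f₂‖ ≤ M)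
    (ha2 : |a₂| ≤ μ) (hb2 : |b₂| ≤ μ) (hc2 : M * |c₂| ≤ μ)
    (ha : |a₂ - a₁| ≤ μ * (2 * m + M⁻¹ * ‖f₂ - f₁‖))
    (hb : |b₂ - b₁| ≤ μ * (2 * m + M⁻¹ * ‖f₂ - f₁‖))
    (hc : M * |c₂ - c₁| ≤ μ * (2 * m + M⁻¹ * ‖f₂ - f₁‖)) (hm : 0 ≤ m) :
    ‖(a₂ • g₂ + b₂ • f₂ + c₂ • Qm f₂ g₂) - (a₁ • g₁ + b₁ • f₁ + c₁ • Qm f₁ g₁)‖ ^ 2 ≤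
      53 * μ ^ 2 * (‖g₂ - g₁‖ ^ 2 + m ^ 2 * ‖g₁‖ ^ 2 + M⁻¹ ^ 2 * (‖f₂ - f₁‖ ^ 2 * ‖g₁‖ ^ 2)
        + ‖f₂ - f₁‖ ^ 2 + m ^ 2 * ‖f₁‖ ^ 2) := by
  set d := ‖f₂ - f₁‖ with hd
  have hd0 : 0 ≤ d := norm_nonneg _
  have e : (a₂ • g₂ + b₂ • f₂ + c₂ • Qm f₂ g₂) - (a₁ • g₁ + b₁ • f₁ + c₁ • Qm f₁ g₁)
      = a₂ • (g₂ - g₁) + (a₂ - a₁) • g₁ + b₂ • (f₂ - f₁) + (b₂ - b₁) • f₁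
        + c₂ • Qm f₂ (g₂ - g₁) + c₂ • (Qm f₂ g₁ - Qm f₁ g₁) + (c₂ - c₁) • Qm f₁ g₁ := by
    rw [Qm_sub]
    simp only [smul_sub, sub_smul]
    abel
  have hc2' : |c₂| ≤ μ * M⁻¹ := by
    rw [← div_eq_mul_inv, le_div_iff₀ hM]; linarith
  have t1 : ‖a₂ • (g₂ - g₁)‖ ≤ μ * ‖g₂ - g₁‖ := by
    rw [norm_smul, Real.norm_eq_abs]; gcongr
  have t2 : ‖(a₂ - a₁) • g₁‖ ≤ μ * (2 * m + M⁻¹ * d) * ‖g₁‖ := by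
    rw [norm_smul, Real.norm_eq_abs]; gcongr
  have t3 : ‖b₂ • (f₂ - f₁)‖ ≤ μ * d := by
    rw [norm_smul, Real.norm_eq_abs]; gcongr
  have t4 : ‖(b₂ - b₁) • f₁‖ ≤ μ * (2 * m * ‖f₁‖ + d) := by
    rw [norm_smul, Real.norm_eq_abs]
    calc |b₂ - b₁| * ‖f₁‖ ≤ μ * (2 * m + M⁻¹ * d) * ‖f₁‖ := by gcongr
      _ = μ * (2 * m * ‖f₁‖ + M⁻¹ * d * ‖f₁‖) := by ring
      _ ≤ μ * (2 * m * ‖f₁‖ + M⁻¹ * d * M) := by gcongr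
      _ = _ := by field_simp
  have t5 : ‖c₂ • Qm f₂ (g₂ - g₁)‖ ≤ μ * ‖g₂ - g₁‖ := by
    rw [norm_smul, Real.norm_eq_abs]
    calc |c₂| * ‖Qm f₂ (g₂ - g₁)‖ ≤ |c₂| * (M * ‖g₂ - g₁‖) := by
          gcongr; exact (Qm_norm _ _).trans (by gcongr)
      _ = (M * |c₂|) * ‖g₂ - g₁‖ := by ring
      _ ≤ _ := by gcongr
  have t6 : ‖c₂ • (Qm f₂ g₁ - Qm f₁ g₁)‖ ≤ μ * (3 * (M⁻¹ * d) * ‖g₁‖) := by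
    rw [norm_smul, Real.norm_eq_abs]
    calc |c₂| * ‖Qm f₂ g₁ - Qm f₁ g₁‖ ≤ (μ * M⁻¹) * (3 * d * ‖g₁‖) := by
          gcongr; exact Qm_diff _ _ _ hf1 hf2
      _ = _ := by ring
  have t7 : ‖(c₂ - c₁) • Qm f₁ g₁‖ ≤ μ * (2 * m + M⁻¹ * d) * ‖g₁‖ := by
    rw [norm_smul, Real.norm_eq_abs]
    calc |c₂ - c₁| * ‖Qm f₁ g₁‖ ≤ |c₂ - c₁| * (M * ‖g₁‖) := by
          gcongr; exact (Qm_norm _ _).trans (by gcongr)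
      _ = (M * |c₂ - c₁|) * ‖g₁‖ := by ring
      _ ≤ _ := by gcongr
  have tot : ‖(a₂ • g₂ + b₂ • f₂ + c₂ • Qm f₂ g₂) - (a₁ • g₁ + b₁ • f₁ + c₁ • Qm f₁ g₁)‖ ≤
      μ * (2 * ‖g₂ - g₁‖ + 4 * (m * ‖g₁‖) + 5 * (M⁻¹ * (d * ‖g₁‖)) + 2 * d + 2 * (m * ‖f₁‖)) := by
    rw [e]
    refine (norm_add_le _ _).trans ?_
    refine (add_le_add_left (norm_add_le _ _) _).trans ?_
    refine (add_le_add_left (add_le_add_left (norm_add_le _ _) _) _).trans ?_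
    refine (add_le_add_left (add_le_add_left (add_le_add_left (norm_add_le _ _) _) _) _).trans ?_
    refine (add_le_add_left (add_le_add_left (add_le_add_left (add_le_add_left
      (norm_add_le _ _) _) _) _) _).trans ?_
    refine (add_le_add_left (add_le_add_left (add_le_add_left (add_le_add_left (add_le_add_left
      (norm_add_le _ _) _) _) _) _) _).trans ?_
    linarith
  have cs : ∀ A B C D E : ℝ, (2 * A + 4 * B + 5 * C + 2 * D + 2 * E) ^ 2 ≤
      53 * (A ^ 2 + B ^ 2 + C ^ 2 + D ^ 2 + E ^ 2) := by
    intro A B C D E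
    nlinarith [sq_nonneg (2 * B - 4 * A), sq_nonneg (2 * C - 5 * A), sq_nonneg (2 * D - 2 * A),
      sq_nonneg (2 * E - 2 * A), sq_nonneg (4 * C - 5 * B), sq_nonneg (4 * D - 2 * B),
      sq_nonneg (4 * E - 2 * B), sq_nonneg (5 * D - 2 * C), sq_nonneg (5 * E - 2 * C),
      sq_nonneg (2 * E - 2 * D)]
  calc _ ≤ (μ * (2 * ‖g₂ - g₁‖ + 4 * (m * ‖g₁‖) + 5 * (M⁻¹ * (d * ‖g₁‖)) + 2 * d
          + 2 * (m * ‖f₁‖))) ^ 2 := by gcongr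
    _ = μ ^ 2 * (2 * ‖g₂ - g₁‖ + 4 * (m * ‖g₁‖) + 5 * (M⁻¹ * (d * ‖g₁‖)) + 2 * d
          + 2 * (m * ‖f₁‖)) ^ 2 := by ring
    _ ≤ μ ^ 2 * (53 * (‖g₂ - g₁‖ ^ 2 + (m * ‖g₁‖) ^ 2 + (M⁻¹ * (d * ‖g₁‖)) ^ 2 + d ^ 2
          + (m * ‖f₁‖) ^ 2)) := by gcongr; exact cs _ _ _ _ _
    _ = _ := by ring

lemma Jc_prod (θ : ℝ) (u : ℝ → E2) (hm : Measurable u) :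
    Jc θ u = ∫⁻ z, ‖u (z.2 + z.1) - u z.2‖ₑ ^ 2 * W θ z.1 ∂((volume.restrict (Set.Ioi 0)).prod IP) := by
  have hW := measurable_W θ
  rw [lintegral_prod _ (by fun_prop)]
  unfold Jc
  refine lintegral_congr fun h => ?_
  dsimp only
  rw [lintegral_mul_const _ (by fun_prop)]

lemma Jc_bound (θ : ℝ) (h0 : 0 < θ) (h1 : θ < 1) (f g F : ℝ → E2) (M μ : ℝ) (hM : 0 < M)
    (hfm : Measurable f) (hgm : Measurable g) (hFm : Measurable F)
    (hf : ∀ s, ‖f s‖ ≤ M)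
    (hgi : ∀ a b, IntervalIntegrable g volume a b)
    (hfg : ∀ a b : ℝ, a ≤ b → f b - f a = ∫ u in a..b, g u)
    (hF : ∀ t h : ℝ, 0 < h → ‖F (t + h) - F t‖ ^ 2 ≤
      53 * μ ^ 2 * (‖g (t + h) - g t‖ ^ 2 + min 1 h ^ 2 * ‖g t‖ ^ 2
        + M⁻¹ ^ 2 * (‖f (t + h) - f t‖ ^ 2 * ‖g t‖ ^ 2)
        + ‖f (t + h) - f t‖ ^ 2 + min 1 h ^ 2 * ‖f t‖ ^ 2)) :
    Jc θ F ≤ ENNReal.ofReal (53 * μ ^ 2) * (Jc θ g + Bc θ * (∫⁻ t in Set.Ioc (-π) π, ‖g t‖ₑ ^ 2)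
      + 144 * Bc θ * Jc θ g + Jc θ f + Bc θ * (∫⁻ t in Set.Ioc (-π) π, ‖f t‖ₑ ^ 2)) := by
  have hW := measurable_W θ
  set ν := (volume.restrict (Set.Ioi (0 : ℝ))).prod IP with hν
  have en : ∀ v : E2, ‖v‖ₑ ^ 2 = ENNReal.ofReal (‖v‖ ^ 2) := fun v => by
    rw [← ofReal_norm, ENNReal.ofReal_pow (norm_nonneg _)]
  have T2 : ∀ u : ℝ → E2, Measurable u →
      ∫⁻ z, ENNReal.ofReal (min 1 z.1 ^ 2) * W θ z.1 * ‖u z.2‖ₑ ^ 2 ∂ν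
      = Bc θ * ∫⁻ t in Set.Ioc (-π) π, ‖u t‖ₑ ^ 2 := by
    intro u hu
    rw [hν, lintegral_prod_mul (f := fun h => ENNReal.ofReal (min 1 h ^ 2) * W θ h)
      (g := fun t => ‖u t‖ₑ ^ 2) (by fun_prop) (by fun_prop)]
    rfl
  have T3 : ∫⁻ z, ENNReal.ofReal (M⁻¹ ^ 2) *
      (‖f (z.2 + z.1) - f z.2‖ₑ ^ 2 * W θ z.1 * ‖g z.2‖ₑ ^ 2) ∂ν ≤ 144 * Bc θ * Jc θ g := by
    rw [lintegral_const_mul' _ _ ENNReal.ofReal_ne_top, Jc_prod θ g hgm, hν,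
      lintegral_prod_symm _ (by fun_prop), lintegral_prod_symm _ (by fun_prop)]
    have i1 : ∀ t, ∫⁻ h in Set.Ioi 0, ‖f (t + h) - f t‖ₑ ^ 2 * W θ h * ‖g t‖ₑ ^ 2
        = (∫⁻ h in Set.Ioi 0, ‖f (t + h) - f t‖ₑ ^ 2 * W θ h) * ‖g t‖ₑ ^ 2 := fun t =>
      lintegral_mul_const _ (by fun_prop)
    simp only [i1]
    have i2 := lintegral_mono (μ := IP) (fun t => core θ h0 h1 f g t M hM hf hgi hfg)
    rw [lintegral_const_mul' _ _ (ENNReal.mul_ne_top (ENNReal.mul_ne_top (by norm_num)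
      (Bc_lt_top θ h0 h1).ne) ENNReal.ofReal_ne_top)] at i2
    refine (mul_le_mul' le_rfl i2).trans (le_of_eq ?_)
    have : ENNReal.ofReal (M⁻¹ ^ 2) * ENNReal.ofReal (M ^ 2) = 1 := by
      rw [← ENNReal.ofReal_mul (by positivity), ← mul_pow, inv_mul_cancel₀ hM.ne']; simp
    rw [← mul_assoc, mul_left_comm, this, mul_one]
  have hle : Jc θ F ≤ ∫⁻ z, ENNReal.ofReal (53 * μ ^ 2) *
      (‖g (z.2 + z.1) - g z.2‖ₑ ^ 2 * W θ z.1
      + ENNReal.ofReal (min 1 z.1 ^ 2) * W θ z.1 * ‖g z.2‖ₑ ^ 2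
      + ENNReal.ofReal (M⁻¹ ^ 2) * (‖f (z.2 + z.1) - f z.2‖ₑ ^ 2 * W θ z.1 * ‖g z.2‖ₑ ^ 2)
      + ‖f (z.2 + z.1) - f z.2‖ₑ ^ 2 * W θ z.1
      + ENNReal.ofReal (min 1 z.1 ^ 2) * W θ z.1 * ‖f z.2‖ₑ ^ 2) ∂ν := by
    rw [Jc_prod θ F hFm, ← hν]
    refine lintegral_mono_ae ?_
    have hae : ∀ᵐ z ∂ν, z.1 ∈ Set.Ioi (0 : ℝ) := by
      have : ∀ᵐ h ∂(volume.restrict (Set.Ioi (0 : ℝ))), h ∈ Set.Ioi (0 : ℝ) :=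
        ae_restrict_mem measurableSet_Ioi
      exact Measure.quasiMeasurePreserving_fst.ae this
    filter_upwards [hae] with z hz
    have h3 := ENNReal.ofReal_le_ofReal (hF z.2 z.1 hz)
    rw [← en] at h3
    refine (mul_le_mul' h3 le_rfl).trans (le_of_eq ?_)
    have hn : ∀ x : ℝ, 0 ≤ x ^ 2 := fun x => sq_nonneg x
    simp only [en]
    rw [ENNReal.ofReal_mul (by positivity), ENNReal.ofReal_add (by positivity) (by positivity),
      ENNReal.ofReal_add (by positivity) (by positivity),
      ENNReal.ofReal_add (by positivity) (by positivity),
      ENNReal.ofReal_add (by positivity) (by positivity),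
      ENNReal.ofReal_mul (hn _), ENNReal.ofReal_mul (hn M⁻¹), ENNReal.ofReal_mul (hn _),
      ENNReal.ofReal_mul (hn _)]
    ring
  refine hle.trans ?_
  rw [lintegral_const_mul' _ _ ENNReal.ofReal_ne_top]
  gcongr
  rw [lintegral_add_left (by fun_prop), lintegral_add_left (by fun_prop),
    lintegral_add_left (by fun_prop), lintegral_add_left (by fun_prop), T2 g hgm, T2 f hfm,
    ← Jc_prod θ g hgm, ← Jc_prod θ f hfm]
  gcongr


lemma periodic_deriv (U V : ℝ → E2) (hp : Function.Periodic U (2 * π))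
    (hd : ∀ s, HasDerivAt U (V s) s) : Function.Periodic V (2 * π) := by
  intro s
  have h1 := (hd (s + 2 * π)).comp_add_const s (2 * π)
  have : (fun x => U (x + 2 * π)) = U := funext hp
  rw [this] at h1
  exact h1.unique (hd s)

lemma prep (f Y'' : ℝ → E2) (hfp : Function.Periodic f (2 * π)) 
    (hY : LocallyIntegrable Y'' volume)
    (hfY : ∀ a b : ℝ, a ≤ b → f b - f a = ∫ u in a..b, Y'' u) :
    ∃ g : ℝ → E2, Measurable g ∧ Function.Periodic g (2 * π) ∧
      (∀ᵐ x, HasDerivAt f (g x) x) ∧ LocallyIntegrable g ∧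
      (∀ a b : ℝ, a ≤ b → f b - f a = ∫ u in a..b, g u) := by
  have hae : ∀ᵐ x, HasDerivAt f (Y'' x) x := by
    have h := LocallyIntegrable.ae_hasDerivAt_integral hY
    filter_upwards [h] with x hx
    have h1 := (hx (x - 1)).const_add (f (x - 1))
    refine h1.congr_of_eventuallyEq ?_
    filter_upwards [Ioi_mem_nhds (show x - 1 < x by linarith)] with y hy
    rw [← hfY _ _ (le_of_lt hy)]
    abel
  have heq : deriv f =ᵐ[volume] Y'' := by
    filter_upwards [hae] with x hx using hx.deriv
  refine ⟨deriv f, measurable_deriv f, ?_, ?_, ?_, ?_⟩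
  · intro x
    rw [← deriv_comp_add_const]
    congr 1
    exact funext hfp
  · filter_upwards [hae] with x hx
    rw [hx.deriv]; exact hx
  · intro x
    exact (hY x).congr heq.symm 
  · intro a b hab
    rw [hfY a b hab]
    exact intervalIntegral.integral_congr_ae' (by filter_upwards [heq] with x hx _ using hx.symm)
      (by filter_upwards [heq] with x hx _ using hx.symm)

lemma le_normLinf (f : ℝ → E2) (hc : Continuous f) (hp : Function.Periodic f (2 * π)) (s : ℝ) :
    ‖f s‖ ≤ normLinf f := by
  obtain ⟨C, hC⟩ := isCompact_Icc.exists_bound_of_continuousOn (s := Set.Icc 0 (2 * π))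
      (f := f) hc.continuousOn
  refine le_ciSup (f := fun s => ‖f s‖) ⟨C, ?_⟩ s
  rintro _ ⟨x, rfl⟩
  obtain ⟨y, hy, hxy⟩ := hp.exists_mem_Ico₀ (by positivity) x
  simp only [hxy]
  exact hC y ⟨hy.1, hy.2.le⟩

lemma stretch_lower (Y f : ℝ → E2) (lam : ℝ) (hd : ∀ s, HasDerivAt Y (f s) s)
    (hst : ∀ s₁ s₂ : ℝ, |s₁ - s₂| ≤ π → lam * |s₁ - s₂| ≤ ‖Y s₁ - Y s₂‖) (s : ℝ) :
    lam ≤ ‖f s‖ := by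
  have h1 := (hasDerivAt_iff_tendsto_slope.1 (hd s)).norm
  refine ge_of_tendsto h1 ?_
  have : ∀ᶠ x in 𝓝[≠] s, |x - s| < π := by
    refine eventually_nhdsWithin_of_eventually_nhds ?_
    have := Metric.ball_mem_nhds s pi_pos
    filter_upwards [this] with x hx
    rwa [Metric.mem_ball, Real.dist_eq] at hx
  filter_upwards [this, self_mem_nhdsWithin] with x hx hne
  have hpos : 0 < |x - s| := abs_pos.2 (sub_ne_zero.2 hne)
  rw [slope_def_module, norm_smul, norm_inv, Real.norm_eq_abs, inv_mul_eq_div, le_div_iff₀ hpos]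
  exact hst x s hx.le

lemma S_lip (S Sp Ss : ℝ → ℝ → ℝ) (lam μ M : ℝ) (hl : 0 < lam) (hM : 0 < M)
    (h1 : ∀ p s, 0 < p → HasDerivAt (fun q => S q s) (Sp p s) p)
    (h2 : ∀ p s, 0 < p → HasDerivAt (fun t => S p t) (Ss p s) s)
    (hb : ∀ p s, lam ≤ p → p ≤ M → |S p s| + |Ss p s| + M * |Sp p s| ≤ μ)
    (p₁ p₂ s₁ s₂ : ℝ) (hp1 : lam ≤ p₁) (hp1' : p₁ ≤ M) (hp2 : lam ≤ p₂) (hp2' : p₂ ≤ M) :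
    |S p₁ s₁ - S p₂ s₂| ≤ μ * (|s₁ - s₂| + M⁻¹ * |p₁ - p₂|) := by
  have a1 : |S p₁ s₁ - S p₁ s₂| ≤ μ * |s₁ - s₂| := by
    have := Convex.norm_image_sub_le_of_norm_hasDerivWithin_le (f := fun t => S p₁ t)
      (f' := fun t => Ss p₁ t) (s := Set.univ) (C := μ) (x := s₂) (y := s₁)
      (fun x _ => (h2 p₁ x (hl.trans_le hp1)).hasDerivWithinAt) (fun x _ => ?_) convex_univ
      trivial trivial
    · simpa [Real.norm_eq_abs] using this
    · rw [Real.norm_eq_abs]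
      have := hb p₁ x hp1 hp1'
      have := abs_nonneg (S p₁ x)
      have : 0 ≤ M * |Sp p₁ x| := by positivity
      linarith
  have a2 : |S p₁ s₂ - S p₂ s₂| ≤ (μ * M⁻¹) * |p₁ - p₂| := by
    have := Convex.norm_image_sub_le_of_norm_hasDerivWithin_le (f := fun t => S t s₂)
      (f' := fun t => Sp t s₂) (s := Set.Icc lam M) (C := μ * M⁻¹) (x := p₂) (y := p₁)
      (fun x hx => (h1 x s₂ (hl.trans_le hx.1)).hasDerivWithinAt) (fun x hx => ?_)
      (convex_Icc _ _) ⟨hp2, hp2'⟩ ⟨hp1, hp1'⟩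
    · simpa [Real.norm_eq_abs] using this
    · rw [Real.norm_eq_abs, ← div_eq_mul_inv, le_div_iff₀ hM]
      have := hb x s₂ hx.1 hx.2
      have := abs_nonneg (S x s₂)
      have := abs_nonneg (Ss x s₂)
      linarith
  calc |S p₁ s₁ - S p₂ s₂| ≤ |S p₁ s₁ - S p₁ s₂| + |S p₁ s₂ - S p₂ s₂| := abs_sub_le _ _ _
    _ ≤ _ := by linarith

/-- from a Lipschitz bound and a sup bound to the truncated Lipschitz bound -/
lemma trunc (x y μ h r : ℝ) (hμ : 0 < μ) (hh : 0 < h) (hr : 0 ≤ r) (hx : |x| ≤ μ) (hy : |y| ≤ μ)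
    (hl : |x - y| ≤ μ * (h + r)) : |x - y| ≤ μ * (2 * min 1 h + r) := by
  rcases le_total h 1 with h1 | h1
  · rw [min_eq_right h1]
    refine hl.trans ?_
    gcongr
    linarith
  · rw [min_eq_left h1]
    have := abs_sub x y
    nlinarith

lemma chain_S (S Sp Ss : ℝ → ℝ → ℝ) 
    (h1 : ∀ p s, 0 < p → HasDerivAt (fun q => S q s) (Sp p s) p)
    (h2 : ∀ p s, 0 < p → HasDerivAt (fun t => S p t) (Ss p s) s)
    (c1 : ContinuousOn (fun q : ℝ × ℝ => Sp q.1 q.2) (Set.Ioi 0 ×ˢ Set.univ))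
    (c2 : ContinuousOn (fun q : ℝ × ℝ => Ss q.1 q.2) (Set.Ioi 0 ×ˢ Set.univ))
    (f : ℝ → E2) (g : E2) (t : ℝ) (hf : HasDerivAt f g t) (hne : 0 < ‖f t‖) :
    HasDerivAt (fun u => S ‖f u‖ u • f u)
      (S ‖f t‖ t • g + Ss ‖f t‖ t • f t + Sp ‖f t‖ t • Qm (f t) g) t := by
  have hn : HasDerivAt (fun u => ‖f u‖) (⟪f t, g⟫ / ‖f t‖) t := by
    have := (hf.norm_sq).sqrt (by positivity)
    simp only [Real.sqrt_sq (norm_nonneg _)] at this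
    convert this using 1
    rw [mul_div_mul_left _ _ two_ne_zero]
  have hU : (Set.Ioi 0 ×ˢ Set.univ : Set (ℝ × ℝ)) ∈ 𝓝 (‖f t‖, t) :=
    (isOpen_Ioi.prod isOpen_univ).mem_nhds ⟨hne, trivial⟩
  have hs := hasStrictFDerivAt_uncurry_coprod (𝕜 := ℝ) (u := (‖f t‖, t)) (f := S)
    (f₁ := fun p s => ContinuousLinearMap.toSpanSingleton ℝ (Sp p s))
    (f₂ := fun p s => ContinuousLinearMap.toSpanSingleton ℝ (Ss p s))
    (by filter_upwards [hU] with v hv using (h1 v.1 v.2 hv.1).hasFDerivAt)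
    (by filter_upwards [hU] with v hv using (h2 v.1 v.2 hv.1).hasFDerivAt)
    ((ContinuousLinearMap.toSpanSingletonCLE (𝕜 := ℝ) (E := ℝ)).continuous.continuousAt.comp
      (c1.continuousAt hU))
    ((ContinuousLinearMap.toSpanSingletonCLE (𝕜 := ℝ) (E := ℝ)).continuous.continuousAt.comp
      (c2.continuousAt hU))
  have hp := hs.hasFDerivAt.comp_hasDerivAt (f := fun u => (‖f u‖, u)) t
    (hn.prodMk (hasDerivAt_id t))
  have := hp.smul hf
  refine this.congr_deriv ?_
  simp [Function.HasUncurry.uncurry, Qm, add_smul, smul_smul]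
  rw [mul_comm (Sp _ _)]
  abel


lemma Nc_eq_of_summable (σ : ℝ) (u : ℝ → E2) (h : Summable (sobSummand σ u)) :
    Nc σ u = ENNReal.ofReal (∑' k, sobSummand σ u k) :=
  (ENNReal.ofReal_tsum_of_nonneg (sobSummand_nonneg σ u) h).symm

lemma summable_of_Nc (σ : ℝ) (u : ℝ → E2) (h : Nc σ u ≠ ∞) : Summable (sobSummand σ u) := by
  have := ENNReal.summable_toReal h
  refine this.congr fun k => ?_
  rw [ENNReal.toReal_ofReal (sobSummand_nonneg σ u k)]

lemma sob_final (σ τ K : ℝ) (hK : 0 ≤ K) (F Y : ℝ → E2) (hY : Summable (sobSummand τ Y))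
    (h : Nc σ F ≤ ENNReal.ofReal K * Nc τ Y) :
    Summable (sobSummand σ F) ∧ sobNorm σ F ≤ Real.sqrt K * sobNorm τ Y := by
  have hY0 : 0 ≤ ∑' k, sobSummand τ Y k := tsum_nonneg (sobSummand_nonneg τ Y)
  rw [Nc_eq_of_summable τ Y hY, ← ENNReal.ofReal_mul hK] at h
  have hs := summable_of_Nc σ F (ne_top_of_le_ne_top ENNReal.ofReal_ne_top h)
  refine ⟨hs, ?_⟩
  rw [Nc_eq_of_summable σ F hs, ENNReal.ofReal_le_ofReal_iff (by positivity)] at h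
  unfold sobNorm
  rw [← Real.sqrt_mul hK]
  exact Real.sqrt_le_sqrt h

lemma one_le_abs_cast (k : ℤ) (hk : k ≠ 0) : (1 : ℝ) ≤ |(k : ℝ)| := by
  have := Int.one_le_abs hk
  exact_mod_cast this

lemma Nc_mono (σ τ : ℝ) (h : σ ≤ τ) (u : ℝ → E2) : Nc σ u ≤ Nc τ u := by
  refine ENNReal.tsum_le_tsum fun k => ENNReal.ofReal_le_ofReal ?_
  unfold sobSummand
  split_ifs with hk
  · rfl
  · have := coefSq_nonneg u k
    gcongr
    exact one_le_abs_cast k hk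

lemma sob_pow (σ : ℝ) (u v : ℝ → E2) (k : ℤ) (n : ℕ) 
    (h : coefSq v k = (k : ℝ) ^ (2 * n) * coefSq u k) :
    sobSummand σ v k = sobSummand (n + σ) u k := by
  unfold sobSummand
  split_ifs with hk
  · rfl
  · have h1 : (0 : ℝ) < |(k : ℝ)| := zero_lt_one.trans_le (one_le_abs_cast k hk)
    rw [h, ← mul_assoc]
    congr 1
    have : (k : ℝ) ^ (2 * n) = |(k : ℝ)| ^ (2 * (n : ℝ)) := by
      rw [pow_mul, ← sq_abs, ← pow_mul, ← Real.rpow_natCast]; push_cast; rfl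
    rw [this, ← Real.rpow_add h1]
    congr 1; ring

lemma Nc_facts (θ : ℝ) (h0 : 0 < θ) (Y f g : ℝ → E2) (hfc : Continuous f)
    (hYp : Function.Periodic Y (2 * π)) (hfp : Function.Periodic f (2 * π))
    (hYf : ∀ s, HasDerivAt Y (f s) s) (hfg : ∀ᵐ x, HasDerivAt f (g x) x)
    (hgl : LocallyIntegrable g) (hgi : ∀ a b : ℝ, a ≤ b → f b - f a = ∫ u in a..b, g u) :
    ENNReal.ofReal (2 * π) * (∫⁻ t in Set.Ioc (-π) π, ‖f t‖ₑ ^ 2) ≤ Nc 2 Y ∧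
    ENNReal.ofReal (2 * π) * (∫⁻ t in Set.Ioc (-π) π, ‖g t‖ₑ ^ 2) ≤ Nc 2 Y ∧
    Nc θ f ≤ Nc (2 + θ) Y ∧ Nc θ g ≤ Nc (2 + θ) Y := by
  have hYc : Continuous Y := continuous_iff_continuousAt.2 fun s => (hYf s).continuousAt
  have per : ∀ u : ℝ → E2, Function.Periodic u (2 * π) → u π = u (-π) := fun u hu => by
    have := hu (-π)
    rw [← this]; congr 1; ring
  have e1 : ∀ k, coefSq f k = (k : ℝ) ^ 2 * coefSq Y k := fun k => by
    refine deriv_E Y f hfc.locallyIntegrable (fun a b _ => ?_) (.of_forall hYf) (per Y hYp) k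
    exact (intervalIntegral.integral_eq_sub_of_hasDerivAt (fun x _ => hYf x)
      (hfc.intervalIntegrable _ _)).symm
  have e2 : ∀ k, coefSq g k = (k : ℝ) ^ 2 * coefSq f k :=
    deriv_E f g hgl hgi hfg (per f hfp)
  have s2 : ∀ k : ℤ, (k : ℝ) ^ 2 * coefSq f k ≤ sobSummand 2 Y k := fun k => by
    rw [e1]
    unfold sobSummand
    split_ifs with hk
    · simp [hk]
    · have : |(k : ℝ)| ^ (2 * 2 : ℝ) = (k : ℝ) ^ 4 := by
        rw [show (2 * 2 : ℝ) = ((4 : ℕ) : ℝ) by norm_num, Real.rpow_natCast]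
        exact Even.pow_abs (by decide) _
      rw [this]; apply le_of_eq; ring
  refine ⟨?_, ?_, ?_, ?_⟩
  · refine (fatou_L2 Y f hYc hYp (.of_forall hYf)).trans ?_
    refine ENNReal.tsum_le_tsum fun k => ENNReal.ofReal_le_ofReal (le_trans ?_ (s2 k))
    rw [e1]
    have := coefSq_nonneg Y k
    rcases eq_or_ne k 0 with hk | hk
    · simp [hk]
    · have h1 : 1 ≤ (k : ℝ) ^ 2 := by
        have := one_le_abs_cast k hk
        rw [← sq_abs]; nlinarith
      have : 0 ≤ (k : ℝ) ^ 2 * coefSq Y k := by positivity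
      nlinarith
  · refine (fatou_L2 f g hfc hfp hfg).trans ?_
    exact ENNReal.tsum_le_tsum fun k => ENNReal.ofReal_le_ofReal (s2 k)
  · refine le_trans (le_of_eq ?_) (Nc_mono (1 + θ) (2 + θ) (by linarith) Y)
    unfold Nc
    refine tsum_congr fun k => ?_
    rw [sob_pow θ Y f k 1 (by simpa using e1 k)]
    norm_num
  · refine le_of_eq ?_
    unfold Nc
    refine tsum_congr fun k => ?_
    rw [sob_pow θ Y g k 2 (by rw [e2 k, e1 k]; ring)]
    norm_num

/-- the constant -/
def Kc (θ : ℝ) : ℝ≥0∞ := 53 * (cc θ * (2 + 144 * Bc θ) + 2 * Bc θ) / cc θ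

lemma Nc_force (θ μ : ℝ) (h0 : 0 < θ) (h1 : θ < 1) (hμ : 0 < μ) (f g F : ℝ → E2)
    (A : ℝ≥0∞) 
    (hfm : Measurable f) (hgm : Measurable g) (hFm : Measurable F)
    (hfp : Function.Periodic f (2 * π)) (hgp : Function.Periodic g (2 * π))
    (hFp : Function.Periodic F (2 * π))
    (hfL : MemLp f 2 IP) (hgL : MemLp g 2 IP) (hFL : MemLp F 2 IP)
    (a1 : ENNReal.ofReal (2 * π) * (∫⁻ t in Set.Ioc (-π) π, ‖f t‖ₑ ^ 2) ≤ A)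
    (a2 : ENNReal.ofReal (2 * π) * (∫⁻ t in Set.Ioc (-π) π, ‖g t‖ₑ ^ 2) ≤ A)
    (a3 : Nc θ f ≤ A) (a4 : Nc θ g ≤ A)
    (hJ : Jc θ F ≤ ENNReal.ofReal (53 * μ ^ 2) *
      (Jc θ g + Bc θ * (∫⁻ t in Set.Ioc (-π) π, ‖g t‖ₑ ^ 2)
      + 144 * Bc θ * Jc θ g + Jc θ f + Bc θ * (∫⁻ t in Set.Ioc (-π) π, ‖f t‖ₑ ^ 2))) :
    Nc θ F ≤ ENNReal.ofReal ((Kc θ).toReal * μ ^ 2) * A := by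
  have hc0 := cc_ne_zero θ
  have hct := (cc_lt_top θ h0 h1).ne
  have hB := (Bc_lt_top θ h0 h1).ne
  have hK : Kc θ ≠ ∞ := by
    unfold Kc
    refine ENNReal.div_ne_top ?_ hc0
    finiteness
  have key : cc θ * Nc θ F ≤ ENNReal.ofReal (53 * μ ^ 2) * (cc θ * (2 + 144 * Bc θ) + 2 * Bc θ) * A := by
    rw [← Jc_eq θ F hFm hFp hFL]
    calc _ ≤ ENNReal.ofReal (2 * π) * _ := mul_le_mul' le_rfl hJ
      _ = ENNReal.ofReal (53 * μ ^ 2) * (ENNReal.ofReal (2 * π) * Jc θ g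
          + Bc θ * (ENNReal.ofReal (2 * π) * (∫⁻ t in Set.Ioc (-π) π, ‖g t‖ₑ ^ 2))
          + 144 * Bc θ * (ENNReal.ofReal (2 * π) * Jc θ g) + ENNReal.ofReal (2 * π) * Jc θ f
          + Bc θ * (ENNReal.ofReal (2 * π) * (∫⁻ t in Set.Ioc (-π) π, ‖f t‖ₑ ^ 2))) := by ring
      _ ≤ ENNReal.ofReal (53 * μ ^ 2) * (cc θ * A + Bc θ * A + 144 * Bc θ * (cc θ * A)
          + cc θ * A + Bc θ * A) := by
        rw [Jc_eq θ g hgm hgp hgL, Jc_eq θ f hfm hfp hfL]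
        gcongr
      _ = _ := by ring
  have e : ENNReal.ofReal ((Kc θ).toReal * μ ^ 2) = 
      (cc θ)⁻¹ * (ENNReal.ofReal (53 * μ ^ 2) * (cc θ * (2 + 144 * Bc θ) + 2 * Bc θ)) := by
    rw [ENNReal.ofReal_mul ENNReal.toReal_nonneg, ENNReal.ofReal_toReal hK,
      ENNReal.ofReal_mul (by norm_num)]
    unfold Kc
    rw [ENNReal.div_eq_inv_mul]
    simp only [ENNReal.ofReal_ofNat]
    ring
  calc Nc θ F = (cc θ)⁻¹ * (cc θ * Nc θ F) := by
        rw [← mul_assoc, ENNReal.inv_mul_cancel hc0 hct, one_mul]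
    _ ≤ (cc θ)⁻¹ * _ := mul_le_mul' le_rfl key
    _ = _ := by rw [e]; ring


lemma memLp_of_lint (u : ℝ → E2) (hm : Measurable u)
    (h : (∫⁻ t in Set.Ioc (-π) π, ‖u t‖ₑ ^ 2) ≠ ∞) : MemLp u 2 IP := by
  rw [memLp_two_iff_integrable_sq_norm hm.aestronglyMeasurable]
  refine ⟨by fun_prop, ?_⟩
  unfold HasFiniteIntegral
  simp only [enorm_pow, enorm_norm]
  exact h.lt_top

lemma lint_of_mul (A : ℝ≥0∞) (hA : A ≠ ∞) (x : ℝ≥0∞) (h : ENNReal.ofReal (2 * π) * x ≤ A) :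
    x ≠ ∞ := by
  rintro rfl
  have hp := pi_pos
  rw [ENNReal.mul_top (by simpa using hp)] at h
  exact hA (top_le_iff.1 h)

lemma L2_final (F Ft f g Y : ℝ → E2) (μ : ℝ) (hμ : 0 < μ) (hae : F =ᵐ[volume] Ft)
    (hFm : Measurable Ft) (hfm : Measurable f) 
    (hb : ∀ t, ‖Ft t‖ ≤ 2 * μ * ‖g t‖ + μ * ‖f t‖)
    (hY : Summable (sobSummand 2 Y))
    (a1 : ENNReal.ofReal (2 * π) * (∫⁻ t in Set.Ioc (-π) π, ‖f t‖ₑ ^ 2) ≤ Nc 2 Y)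
    (a2 : ENNReal.ofReal (2 * π) * (∫⁻ t in Set.Ioc (-π) π, ‖g t‖ₑ ^ 2) ≤ Nc 2 Y) :
    MemLp Ft 2 IP ∧ IntervalIntegrable (fun s => ‖F s‖ ^ 2) volume (-π) π ∧
      normL2v F ≤ 2 * μ * sobNorm 2 Y := by
  have hp := pi_pos
  have hpi : (-π) ≤ π := by linarith
  have hA : Nc 2 Y ≠ ∞ := by rw [Nc_eq_of_summable 2 Y hY]; exact ENNReal.ofReal_ne_top
  have en : ∀ v : E2, ‖v‖ₑ ^ 2 = ENNReal.ofReal (‖v‖ ^ 2) := fun v => by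
    rw [← ofReal_norm, ENNReal.ofReal_pow (norm_nonneg _)]
  have key : ENNReal.ofReal (2 * π) * (∫⁻ t in Set.Ioc (-π) π, ‖Ft t‖ₑ ^ 2)
      ≤ ENNReal.ofReal (10 * μ ^ 2) * Nc 2 Y := by
    have p1 : ∀ t, ‖Ft t‖ₑ ^ 2 ≤ ENNReal.ofReal (2 * μ ^ 2) * ‖f t‖ₑ ^ 2
        + ENNReal.ofReal (8 * μ ^ 2) * ‖g t‖ₑ ^ 2 := by
      intro t
      rw [en, en, en, ← ENNReal.ofReal_mul (by positivity), ← ENNReal.ofReal_mul (by positivity),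
        ← ENNReal.ofReal_add (by positivity) (by positivity)]
      refine ENNReal.ofReal_le_ofReal ?_
      calc ‖Ft t‖ ^ 2 ≤ (2 * μ * ‖g t‖ + μ * ‖f t‖) ^ 2 := by gcongr; exact hb t
        _ ≤ _ := by nlinarith [sq_nonneg (2 * μ * ‖g t‖ - μ * ‖f t‖)]
    calc _ ≤ ENNReal.ofReal (2 * π) * _ := mul_le_mul' le_rfl (lintegral_mono p1)
      _ = ENNReal.ofReal (2 * μ ^ 2) * (ENNReal.ofReal (2 * π) *
            (∫⁻ t in Set.Ioc (-π) π, ‖f t‖ₑ ^ 2)) +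
          ENNReal.ofReal (8 * μ ^ 2) * (ENNReal.ofReal (2 * π) *
            (∫⁻ t in Set.Ioc (-π) π, ‖g t‖ₑ ^ 2)) := by
        rw [lintegral_add_left (by fun_prop), lintegral_const_mul' _ _ ENNReal.ofReal_ne_top,
          lintegral_const_mul' _ _ ENNReal.ofReal_ne_top]
        ring
      _ ≤ ENNReal.ofReal (2 * μ ^ 2) * Nc 2 Y + ENNReal.ofReal (8 * μ ^ 2) * Nc 2 Y := by gcongr
      _ = _ := by
        rw [← add_mul, ← ENNReal.ofReal_add (by positivity) (by positivity)]
        congr 2; ring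
  have hfin := lint_of_mul _ (by finiteness) _ key
  have hL := memLp_of_lint Ft hFm hfin
  have hae' : (fun s => ‖F s‖ ^ 2) =ᵐ[IP] fun s => ‖Ft s‖ ^ 2 := by
    filter_upwards [ae_restrict_of_ae hae] with x hx
    rw [hx]
  refine ⟨hL, ?_, ?_⟩
  · rw [intervalIntegrable_iff_integrableOn_Ioc_of_le hpi]
    exact ((memLp_two_iff_integrable_sq_norm hFm.aestronglyMeasurable).1 hL).congr hae'.symm
  · unfold normL2v sobNorm
    have hS0 : 0 ≤ ∑' k, sobSummand 2 Y k := tsum_nonneg (sobSummand_nonneg 2 Y)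
    rw [show 2 * μ = Real.sqrt ((2 * μ) ^ 2) from (Real.sqrt_sq (by positivity)).symm,
      ← Real.sqrt_mul (by positivity)]
    refine Real.sqrt_le_sqrt ?_
    rw [intervalIntegral.integral_of_le hpi, integral_congr_ae hae',
      integral_eq_lintegral_of_nonneg_ae (.of_forall fun _ => by positivity) (by fun_prop)]
    simp only [← en]
    rw [Nc_eq_of_summable 2 Y hY, ← ENNReal.ofReal_mul (by positivity)] at key
    have k2 := ENNReal.toReal_mono ENNReal.ofReal_ne_top key
    rw [ENNReal.toReal_mul, ENNReal.toReal_ofReal (by positivity),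
      ENNReal.toReal_ofReal (by positivity)] at k2
    set X := (∫⁻ t in Set.Ioc (-π) π, ‖Ft t‖ₑ ^ 2).toReal with hX
    have hX0 : 0 ≤ X := ENNReal.toReal_nonneg
    have h3 := Real.pi_gt_three
    have hm0 : 0 ≤ μ ^ 2 * ∑' k, sobSummand 2 Y k := by positivity
    nlinarith

lemma coefSq_congr (F G : ℝ → E2) (h : F =ᵐ[volume] G) (k : ℤ) : coefSq F k = coefSq G k := by
  unfold coefSq
  refine Finset.sum_congr rfl fun j _ => ?_
  congr 1
  refine intervalIntegral.integral_congr_ae ?_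
  filter_upwards [h] with x hx _
  rw [hx]

lemma Nc_congr (σ : ℝ) (F G : ℝ → E2) (h : F =ᵐ[volume] G) : Nc σ F = Nc σ G := by
  unfold Nc sobSummand
  simp only [coefSq_congr F G h]

lemma Kc_nonneg_bound (θ μ : ℝ) (hμ : 0 < μ) :
    Real.sqrt ((Kc θ).toReal * μ ^ 2) ≤ (Real.sqrt (Kc θ).toReal + 1) * μ := by
  rw [Real.sqrt_mul ENNReal.toReal_nonneg, Real.sqrt_sq hμ.le]
  nlinarith [Real.sqrt_nonneg (Kc θ).toReal]

/-- `L²` and `Ḣ^θ` bounds for the elastic force density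
`F_Y(s) = d/ds [S(|Y'(s)|, s) Y'(s)]`. -/
theorem statement1 :
    ∃ C : ℝ, 0 < C ∧
      ∀ θ : ℝ, 0 < θ → θ < 1 →
        ∃ Cθ : ℝ, 0 < Cθ ∧
          ∀ (Y Y' Y'' F : ℝ → E2) (S Sp Ss : ℝ → ℝ → ℝ) (lam μ : ℝ),
            0 < lam → 0 < μ →
            Function.Periodic Y (2 * π) →
            (∀ s, HasDerivAt Y (Y' s) s) →
            Continuous Y' →
            LocallyIntegrable Y'' volume →
            (∀ a b : ℝ, a ≤ b → Y' b - Y' a = ∫ u in a..b, Y'' u) →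
            -- well-stretched condition with constant `lam`
            (∀ s₁ s₂ : ℝ, |s₁ - s₂| ≤ π → lam * |s₁ - s₂| ≤ ‖Y s₁ - Y s₂‖) →
            -- `‖Y‖_{Ḣ^{2+θ}(𝕋)} < ∞`
            Summable (sobSummand (2 + θ) Y) →
            -- `S` is `2π`-periodic in its second argument
            (∀ p s, S p (s + 2 * π) = S p s) →
            -- `S` is continuously differentiable on `(0,∞) × ℝ`, with partial
            -- derivatives `Sp` and `Ss`
            (∀ p s, 0 < p → HasDerivAt (fun q => S q s) (Sp p s) p) →
            (∀ p s, 0 < p → HasDerivAt (fun t => S p t) (Ss p s) s) →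
            ContinuousOn (fun q : ℝ × ℝ => S q.1 q.2) (Set.Ioi 0 ×ˢ Set.univ) →
            ContinuousOn (fun q : ℝ × ℝ => Sp q.1 q.2) (Set.Ioi 0 ×ˢ Set.univ) →
            ContinuousOn (fun q : ℝ × ℝ => Ss q.1 q.2) (Set.Ioi 0 ×ˢ Set.univ) →
            -- the `C⁰` and `C¹` bound for `S` with constant `μ`
            (∀ p s, lam ≤ p → p ≤ normLinf Y' →
              |S p s| + |Ss p s| + normLinf Y' * |Sp p s| ≤ μ) →
            -- the `C^{1,1}`-type bound for `S` with constant `μ`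
            (∀ p₁ p₂ s₁ s₂ : ℝ, lam ≤ p₁ → p₁ ≤ normLinf Y' → lam ≤ p₂ → p₂ ≤ normLinf Y' →
              |Ss p₁ s₁ - Ss p₂ s₂| + normLinf Y' * |Sp p₁ s₁ - Sp p₂ s₂|
                ≤ μ * (|s₁ - s₂| + (normLinf Y')⁻¹ * |p₁ - p₂|)) →
            -- `F` is the a.e. derivative of `s ↦ S(|Y'(s)|,s) Y'(s)`
            (∀ᵐ s ∂(volume : Measure ℝ), HasDerivAt (fun u => S ‖Y' u‖ u • Y' u) (F s) s) →
            -- conclusion: `F ∈ L²(𝕋)` with the stated bounds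
            IntervalIntegrable (fun s => ‖F s‖ ^ 2) volume (-π) π ∧
            normL2v F ≤ C * μ * sobNorm 2 Y ∧
            Summable (sobSummand θ F) ∧
            sobNorm θ F ≤ Cθ * μ * sobNorm (2 + θ) Y := by
  refine ⟨2, by norm_num, fun θ h0 h1 => ⟨Real.sqrt (Kc θ).toReal + 1, by positivity, ?_⟩⟩
  intro Y f Y'' F S Sp Ss lam μ hlam hμ hYp hYf hfc hYl hfY hst hsum hSper hSp hSs cS cSp cSs
    hbd hlip hF
  have hfp := periodic_deriv Y f hYp hYf
  obtain ⟨g, hgm, hgp, hfg, hgl, hgi⟩ := prep f Y'' hfp hYl hfY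
  set M := normLinf f with hMdef
  have hfM : ∀ s, ‖f s‖ ≤ M := le_normLinf f hfc hfp
  have hfl : ∀ s, lam ≤ ‖f s‖ := stretch_lower Y f lam hYf hst
  have hf0 : ∀ s, 0 < ‖f s‖ := fun s => hlam.trans_le (hfl s)
  have hM : 0 < M := (hf0 0).trans_le (hfM 0)
  have hfm := hfc.measurable
  have hn2 : Nc (2 + θ) Y ≠ ∞ := by
    rw [Nc_eq_of_summable _ Y hsum]; exact ENNReal.ofReal_ne_top
  have hmono : Nc 2 Y ≤ Nc (2 + θ) Y := Nc_mono 2 (2 + θ) (by linarith) Y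
  have hs2 : Summable (sobSummand 2 Y) := summable_of_Nc 2 Y (ne_top_of_le_ne_top hn2 hmono)
  obtain ⟨a1, a2, a3, a4⟩ := Nc_facts θ h0 Y f g hfc hYp hfp hYf hfg hgl hgi
  have hfL := memLp_of_lint f hfm (lint_of_mul _ hn2 _ (a1.trans hmono))
  have hgL := memLp_of_lint g hgm (lint_of_mul _ hn2 _ (a2.trans hmono))
  -- coefficients
  have hcomp : ∀ T : ℝ → ℝ → ℝ, ContinuousOn (fun q : ℝ × ℝ => T q.1 q.2) (Set.Ioi 0 ×ˢ Set.univ) →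
      Continuous fun t => T ‖f t‖ t := fun T hT =>
    hT.comp_continuous (f := fun t => (‖f t‖, t)) (by fun_prop) fun t => ⟨hf0 t, trivial⟩
  have hac := hcomp S cS
  have hbc := hcomp Ss cSs
  have hcc := hcomp Sp cSp
  have hSfun : ∀ s, (fun q => S q (s + 2 * π)) = fun q => S q s := fun s =>
    funext fun q => hSper q s
  have hSpper : ∀ p s, 0 < p → Sp p (s + 2 * π) = Sp p s := fun p s hp => by
    have h := hSp p (s + 2 * π) hp
    rw [hSfun] at h
    exact h.unique (hSp p s hp)
  have hSsper : ∀ p s, 0 < p → Ss p (s + 2 * π) = Ss p s := fun p s hp => by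
    have h := (hSs p (s + 2 * π) hp).comp_add_const s (2 * π)
    have e : (fun x => S p (x + 2 * π)) = fun x => S p x := funext fun x => hSper p x
    rw [e] at h
    exact h.unique (hSs p s hp)
  have hB : ∀ t, |S ‖f t‖ t| + |Ss ‖f t‖ t| + M * |Sp ‖f t‖ t| ≤ μ := fun t =>
    hbd _ t (hfl t) (hfM t)
  have hA1 : ∀ t, |S ‖f t‖ t| ≤ μ := fun t => by
    have := hB t
    have := abs_nonneg (Ss ‖f t‖ t)
    have : 0 ≤ M * |Sp ‖f t‖ t| := by positivity
    linarith
  have hA2 : ∀ t, |Ss ‖f t‖ t| ≤ μ := fun t => by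
    have := hB t
    have := abs_nonneg (S ‖f t‖ t)
    have : 0 ≤ M * |Sp ‖f t‖ t| := by positivity
    linarith
  have hA3 : ∀ t, M * |Sp ‖f t‖ t| ≤ μ := fun t => by
    have := hB t
    have := abs_nonneg (S ‖f t‖ t)
    have := abs_nonneg (Ss ‖f t‖ t)
    linarith
  obtain ⟨Ft, hFt⟩ : ∃ Ft : ℝ → E2, Ft = fun t =>
    S ‖f t‖ t • g t + Ss ‖f t‖ t • f t + Sp ‖f t‖ t • Qm (f t) (g t) := ⟨_, rfl⟩
  have hFm : Measurable Ft := by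
    rw [hFt]
    unfold Qm
    exact ((hac.measurable.smul hgm).add (hbc.measurable.smul hfm)).add
      (hcc.measurable.smul (((hfm.inner hgm).div hfm.norm).smul hfm))
  have hFp : Function.Periodic Ft (2 * π) := by
    intro t
    rw [hFt]
    simp only [hfp t, hgp t, hSper, hSpper _ t (hf0 t), hSsper _ t (hf0 t)]
  have hae : F =ᵐ[volume] Ft := by
    filter_upwards [hF, hfg] with t h1 h2
    rw [hFt]
    exact h1.unique (chain_S S Sp Ss hSp hSs cSp cSs f (g t) t h2 (hf0 t))
  have hFb : ∀ t, ‖Ft t‖ ≤ 2 * μ * ‖g t‖ + μ * ‖f t‖ := by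
    intro t
    rw [hFt]
    refine (norm_add_le _ _).trans ((add_le_add_left (norm_add_le _ _) _).trans ?_)
    simp only [norm_smul, Real.norm_eq_abs]
    have q1 : |S ‖f t‖ t| * ‖g t‖ ≤ μ * ‖g t‖ := by gcongr; exact hA1 t
    have q2 : |Ss ‖f t‖ t| * ‖f t‖ ≤ μ * ‖f t‖ := by gcongr; exact hA2 t
    have q3 : |Sp ‖f t‖ t| * ‖Qm (f t) (g t)‖ ≤ μ * ‖g t‖ := by
      calc _ ≤ |Sp ‖f t‖ t| * (M * ‖g t‖) := by
            gcongr; exact (Qm_norm _ _).trans (by gcongr; exact hfM t)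
        _ = (M * |Sp ‖f t‖ t|) * ‖g t‖ := by ring
        _ ≤ _ := by gcongr; exact hA3 t
    linarith
  obtain ⟨hFL, r1, r2⟩ := L2_final F Ft f g Y μ hμ hae hFm hfm hFb hs2 a1 a2
  refine ⟨r1, r2, ?_⟩
  have hdiff : ∀ t h : ℝ, 0 < h → ‖Ft (t + h) - Ft t‖ ^ 2 ≤
      53 * μ ^ 2 * (‖g (t + h) - g t‖ ^ 2 + min 1 h ^ 2 * ‖g t‖ ^ 2
        + M⁻¹ ^ 2 * (‖f (t + h) - f t‖ ^ 2 * ‖g t‖ ^ 2)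
        + ‖f (t + h) - f t‖ ^ 2 + min 1 h ^ 2 * ‖f t‖ ^ 2) := by
    intro t h hh
    have hr : 0 ≤ M⁻¹ * ‖f (t + h) - f t‖ := by positivity
    have hth : |t + h - t| = h := by rw [add_sub_cancel_left, abs_of_pos hh]
    have hnn : |‖f (t + h)‖ - ‖f t‖| ≤ ‖f (t + h) - f t‖ := abs_norm_sub_norm_le _ _
    have hup : μ * (|t + h - t| + M⁻¹ * |‖f (t + h)‖ - ‖f t‖|)
        ≤ μ * (h + M⁻¹ * ‖f (t + h) - f t‖) := by
      rw [hth]; gcongr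
    have l1 := (S_lip S Sp Ss lam μ M hlam hM hSp hSs hbd ‖f (t + h)‖ ‖f t‖ (t + h) t
      (hfl _) (hfM _) (hfl _) (hfM _)).trans hup
    have l23 := (hlip ‖f (t + h)‖ ‖f t‖ (t + h) t (hfl _) (hfM _) (hfl _) (hfM _)).trans hup
    have l2 : |Ss ‖f (t + h)‖ (t + h) - Ss ‖f t‖ t| ≤ μ * (h + M⁻¹ * ‖f (t + h) - f t‖) := by
      have : 0 ≤ M * |Sp ‖f (t + h)‖ (t + h) - Sp ‖f t‖ t| := by positivity
      linarith
    have l3 : |M * Sp ‖f (t + h)‖ (t + h) - M * Sp ‖f t‖ t|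
        ≤ μ * (h + M⁻¹ * ‖f (t + h) - f t‖) := by
      rw [← mul_sub, abs_mul, abs_of_pos hM]
      have := abs_nonneg (Ss ‖f (t + h)‖ (t + h) - Ss ‖f t‖ t)
      linarith
    have hA3' : ∀ t, |M * Sp ‖f t‖ t| ≤ μ := fun t => by
      rw [abs_mul, abs_of_pos hM]; exact hA3 t
    have l3' := trunc _ _ μ h _ hμ hh hr (hA3' _) (hA3' _) l3
    rw [← mul_sub, abs_mul, abs_of_pos hM] at l3'
    rw [hFt]
    exact diff_bound (f t) (f (t + h)) (g t) (g (t + h)) _ _ _ _ _ _ μ M (min 1 h) hμ hM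
      (hf0 _) (hf0 _) (hfM _) (hfM _) (hA1 _) (hA2 _) (hA3 _)
      (trunc _ _ μ h _ hμ hh hr (hA1 _) (hA1 _) l1)
      (trunc _ _ μ h _ hμ hh hr (hA2 _) (hA2 _) l2) l3' (by positivity)
  have hJ := Jc_bound θ h0 h1 f g Ft M μ hM hfm hgm hFm hfM
    (fun a b => (hgl.integrableOn_isCompact isCompact_uIcc).intervalIntegrable) hgi hdiff
  have hN := Nc_force θ μ h0 h1 hμ f g Ft (Nc (2 + θ) Y) hfm hgm hFm hfp hgp hFp hfL hgL hFL
    (a1.trans hmono) (a2.trans hmono) a3 a4 hJ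
  rw [← Nc_congr θ F Ft hae] at hN
  obtain ⟨r3, r4⟩ := sob_final θ (2 + θ) _ (by positivity) F Y hsum hN
  refine ⟨r3, r4.trans ?_⟩
  have : 0 ≤ sobNorm (2 + θ) Y := Real.sqrt_nonneg _
  exact mul_le_mul_of_nonneg_right (Kc_nonneg_bound θ μ hμ) this
end
end

section
/- Let ϕ, φ, φ̂, f₁, f₂, f₃ be as in the context. Then f₂ and f₃ are twice continuously differentiable on ℝ, and there exists a constant C > 0 (depending on ϕ) such that for k = 0, 1, 2 and all x ∈ ℝ: |f₂^{(k)}(x)| + |f₃^{(k)}(x)| ≤ C / (1 + |x|^{k+2}), where f^{(k)} denotes the k-th derivative. -/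
open MeasureTheory Real Filter Topology
open scoped ENNReal

noncomputable section

/-- Convolution on `ℝ²`: `(ϕ∗ϕ)(x) = ∫ ϕ(y) ϕ(x−y) dy`. -/
def conv2 (ϕ : ℝ × ℝ → ℝ) (x : ℝ × ℝ) : ℝ := ∫ y : ℝ × ℝ, ϕ y * ϕ (x - y)

/-- The Fourier transform on `ℝ²`: `ĝ(ξ) = ∫ g(x) e^{−i x·ξ} dx`. -/
def ft2 (g : ℝ × ℝ → ℝ) (ξ : ℝ × ℝ) : ℂ :=
  ∫ x : ℝ × ℝ, (g x : ℂ) * Complex.exp (-Complex.I * ((x.1 : ℂ) * (ξ.1 : ℂ) + (x.2 : ℂ) * (ξ.2 : ℂ)))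

/-- `f₁(x) = (x/π) ∫_{ℝ²} e^{ixη₁} (−i η₁ η₂²)/(η₁²+η₂²)² φ̂(η) dη` with `φ = ϕ∗ϕ`. -/
def f1 (ϕ : ℝ × ℝ → ℝ) (x : ℝ) : ℂ :=
  ((x / π : ℝ) : ℂ) * ∫ η : ℝ × ℝ,
    Complex.exp (Complex.I * (x : ℂ) * (η.1 : ℂ)) *
      (-Complex.I * (η.1 : ℂ) * (η.2 : ℂ) ^ 2 / ((η.1 : ℂ) ^ 2 + (η.2 : ℂ) ^ 2) ^ 2) *
      ft2 (conv2 ϕ) η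

/-- `f₂(x) = (x/π) ∫_{ℝ²} e^{ixη₁} (−i η₁ (η₁²−η₂²))/(η₁²+η₂²)² φ̂(η) dη` with `φ = ϕ∗ϕ`. -/
def f2 (ϕ : ℝ × ℝ → ℝ) (x : ℝ) : ℂ :=
  ((x / π : ℝ) : ℂ) * ∫ η : ℝ × ℝ,
    Complex.exp (Complex.I * (x : ℂ) * (η.1 : ℂ)) *
      (-Complex.I * (η.1 : ℂ) * ((η.1 : ℂ) ^ 2 - (η.2 : ℂ) ^ 2) /
        ((η.1 : ℂ) ^ 2 + (η.2 : ℂ) ^ 2) ^ 2) *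
      ft2 (conv2 ϕ) η

/-- `f₃ = f₁ − 1`. -/
def f3 (ϕ : ℝ × ℝ → ℝ) (x : ℝ) : ℂ := f1 ϕ x - 1

/-- `m₁ = ∫_{ℝ²} |x| (ϕ∗ϕ)(x) dx`. -/
def m1 (ϕ : ℝ × ℝ → ℝ) : ℝ := ∫ x : ℝ × ℝ, Real.sqrt (x.1 ^ 2 + x.2 ^ 2) * conv2 ϕ x

/-- `m₂ = ∫_{ℝ²} |x|² (ϕ∗ϕ)(x) dx`. -/
def m2 (ϕ : ℝ × ℝ → ℝ) : ℝ := ∫ x : ℝ × ℝ, (x.1 ^ 2 + x.2 ^ 2) * conv2 ϕ x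

/-! ### Properties of `conv2 ϕ` -/

theorem conv2_eq (ϕ : ℝ × ℝ → ℝ) :
    conv2 ϕ = convolution ϕ ϕ (ContinuousLinearMap.mul ℝ ℝ) volume := rfl

theorem conv2_smooth (ϕ : ℝ × ℝ → ℝ) (hs : ContDiff ℝ (⊤ : ℕ∞) ϕ) (hc : HasCompactSupport ϕ) :
    ContDiff ℝ (⊤ : ℕ∞) (conv2 ϕ) := by
  rw [conv2_eq]
  exact hc.contDiff_convolution_right _ hs.continuous.locallyIntegrable hs

theorem conv2_supp (ϕ : ℝ × ℝ → ℝ) (hc : HasCompactSupport ϕ) :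
    HasCompactSupport (conv2 ϕ) := by
  rw [conv2_eq]
  exact hc.convolution _ hc

theorem conv2_int (ϕ : ℝ × ℝ → ℝ) (hs : ContDiff ℝ (⊤ : ℕ∞) ϕ) (hc : HasCompactSupport ϕ)
    (h1 : (∫ x : ℝ × ℝ, ϕ x) = 1) : (∫ x : ℝ × ℝ, conv2 ϕ x) = 1 := by
  rw [conv2_eq]
  have hi : Integrable ϕ := hs.continuous.integrable_of_hasCompactSupport hc
  rw [integral_convolution _ hi hi]
  simp [h1]

theorem int_complex {E : Type*} [NormedAddCommGroup E] [NormedSpace ℝ E] (g : ℝ × ℝ → E) :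
    (∫ x : ℝ × ℝ, g x) = ∫ z : ℂ, g (z.re, z.im) := by
  rw [← Complex.volume_preserving_equiv_real_prod.integral_comp
    Complex.measurableEquivRealProd.measurableEmbedding]
  rfl

theorem conv2_rot (ϕ : ℝ × ℝ → ℝ)
    (hr : ∀ x y : ℝ × ℝ, x.1 ^ 2 + x.2 ^ 2 = y.1 ^ 2 + y.2 ^ 2 → ϕ x = ϕ y) (a : Circle) (z : ℂ) :
    conv2 ϕ ((rotation a z).re, (rotation a z).im) = conv2 ϕ (z.re, z.im) := by
  unfold conv2
  rw [int_complex, int_complex]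
  have key : ∀ w : ℂ, ϕ ((rotation a w).re, (rotation a w).im) = ϕ (w.re, w.im) := by
    intro w
    apply hr
    have h1 : ‖rotation a w‖ ^ 2 = ‖w‖ ^ 2 := by rw [LinearIsometryEquiv.norm_map]
    rw [← Complex.normSq_eq_norm_sq, ← Complex.normSq_eq_norm_sq, Complex.normSq_apply,
      Complex.normSq_apply] at h1
    simp only
    nlinarith
  rw [← (rotation a).measurePreserving.integral_comp
    (rotation a).toHomeomorph.measurableEmbedding]
  congr 1
  ext w
  rw [key w]
  congr 1
  have := key (z - w)
  rw [map_sub] at this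
  simpa using this

/-- The complexified version. -/
def gc (ϕ : ℝ × ℝ → ℝ) (z : ℂ) : ℂ := (conv2 ϕ (z.re, z.im) : ℂ)

open FourierTransform in
theorem ft2_eq (ϕ : ℝ × ℝ → ℝ) (ξ : ℝ × ℝ) :
    ft2 (conv2 ϕ) ξ = 𝓕 (gc ϕ) ((2 * π)⁻¹ • (⟨ξ.1, ξ.2⟩ : ℂ)) := by
  unfold ft2
  rw [int_complex, Real.fourier_eq']
  congr 1
  ext z
  simp only [gc, smul_eq_mul]
  rw [mul_comm]
  congr 2
  have : -2 * π * inner ℝ z ((2 * π)⁻¹ • (⟨ξ.1, ξ.2⟩ : ℂ)) = -(z.re * ξ.1 + z.im * ξ.2) := by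
    rw [inner_smul_right, Complex.inner]
    simp
    field_simp
    ring
  rw [this]
  push_cast
  ring

theorem gc_smooth (ϕ : ℝ × ℝ → ℝ) (hs : ContDiff ℝ (⊤ : ℕ∞) ϕ) (hc : HasCompactSupport ϕ) :
    ContDiff ℝ (⊤ : ℕ∞) (gc ϕ) := by
  have h1 : ContDiff ℝ (⊤ : ℕ∞) (fun z : ℂ => conv2 ϕ (Complex.equivRealProdCLM z)) :=
    (conv2_smooth ϕ hs hc).comp Complex.equivRealProdCLM.contDiff
  exact Complex.ofRealCLM.contDiff.comp h1

theorem gc_supp (ϕ : ℝ × ℝ → ℝ) (hc : HasCompactSupport ϕ) :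
    HasCompactSupport (gc ϕ) := by
  have h1 : HasCompactSupport ((conv2 ϕ) ∘ Complex.equivRealProdCLM.toHomeomorph) :=
    (conv2_supp ϕ hc).comp_homeomorph _
  exact h1.comp_left (g := fun x : ℝ => (x : ℂ)) (by simp)

open FourierTransform in
theorem ft2_rot (ϕ : ℝ × ℝ → ℝ)
    (hr : ∀ x y : ℝ × ℝ, x.1 ^ 2 + x.2 ^ 2 = y.1 ^ 2 + y.2 ^ 2 → ϕ x = ϕ y) (r θ : ℝ) :
    ft2 (conv2 ϕ) (r * cos θ, r * sin θ) = ft2 (conv2 ϕ) (r, 0) := by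
  rw [ft2_eq, ft2_eq]
  have h : gc ϕ ∘ (rotation (Circle.exp θ)) = gc ϕ := by
    ext z
    simp only [gc, Function.comp]
    rw [conv2_rot ϕ hr]
  have h2 := Real.fourier_comp_linearIsometry (rotation (Circle.exp θ)) (gc ϕ)
    ((2 * π)⁻¹ • (⟨r, 0⟩ : ℂ))
  rw [h] at h2
  rw [h2, map_smul]
  have : (⟨r * cos θ, r * sin θ⟩ : ℂ) = rotation (Circle.exp θ) ⟨r, 0⟩ := by
    rw [rotation_apply, Circle.coe_exp, Complex.exp_mul_I]
    apply Complex.ext <;> simp [← Complex.ofReal_cos, ← Complex.ofReal_sin, mul_comm]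
  rw [this]

theorem conv2_polar (ϕ : ℝ × ℝ → ℝ)
    (hr : ∀ x y : ℝ × ℝ, x.1 ^ 2 + x.2 ^ 2 = y.1 ^ 2 + y.2 ^ 2 → ϕ x = ϕ y) (r θ : ℝ) :
    conv2 ϕ (r * cos θ, r * sin θ) = conv2 ϕ (r, 0) := by
  have := conv2_rot ϕ hr (Circle.exp θ) ⟨r, 0⟩
  rw [← this]
  congr 1
  rw [rotation_apply, Circle.coe_exp, Complex.exp_mul_I]
  simp [← Complex.ofReal_cos, ← Complex.ofReal_sin, mul_comm]

open FourierTransform in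
theorem ft2_props (ϕ : ℝ × ℝ → ℝ) (hs : ContDiff ℝ (⊤ : ℕ∞) ϕ) (hc : HasCompactSupport ϕ) :
    Continuous (ft2 (conv2 ϕ)) ∧
    (∃ C : ℝ, ∀ η, ‖ft2 (conv2 ϕ) η‖ ≤ C * (1 + ‖η‖) ^ (-(6 : ℝ))) ∧
    ∀ x : ℝ, (∫ η : ℝ × ℝ, Complex.exp (Complex.I * (x : ℂ) * (η.1 : ℂ)) * ft2 (conv2 ϕ) η)
      = (2 * π : ℂ) ^ 2 * (conv2 ϕ (x, 0) : ℂ) := by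
  let S : SchwartzMap ℂ ℂ := (gc_supp ϕ hc).toSchwartzMap (gc_smooth ϕ hs hc)
  have hS : ⇑S = gc ϕ := rfl
  have hF : ∀ ξ, ft2 (conv2 ϕ) ξ = (𝓕 S) ((2 * π)⁻¹ • (⟨ξ.1, ξ.2⟩ : ℂ)) := by
    intro ξ
    rw [ft2_eq, SchwartzMap.fourier_coe, hS]
  have hcont : Continuous (fun ξ : ℝ × ℝ => ((2 * π)⁻¹ • (⟨ξ.1, ξ.2⟩ : ℂ))) := by
    have : Continuous (fun ξ : ℝ × ℝ => Complex.equivRealProdCLM.symm ξ) := by fun_prop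
    exact this.const_smul ((2 * π)⁻¹)
  refine ⟨?_, ?_, ?_⟩
  · have : ft2 (conv2 ϕ) = fun ξ => (𝓕 S) ((2 * π)⁻¹ • (⟨ξ.1, ξ.2⟩ : ℂ)) := funext hF
    rw [this]
    exact (𝓕 S).continuous.comp hcont
  · obtain ⟨K, hK⟩ : ∃ K, ∀ z : ℂ, (1 + ‖z‖) ^ 6 * ‖(𝓕 S) z‖ ≤ K := by
      refine ⟨2 ^ 6 * ((Finset.Iic ((6, 0) : ℕ × ℕ)).sup
        fun m => SchwartzMap.seminorm ℝ m.1 m.2) (𝓕 S), fun z => ?_⟩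
      have := SchwartzMap.one_add_le_sup_seminorm_apply (𝕜 := ℝ) (m := (6, 0)) (k := 6) (n := 0)
        le_rfl le_rfl (𝓕 S) z
      rw [norm_iteratedFDeriv_zero] at this
      exact this
    refine ⟨K * (2 * π) ^ 6, fun η => ?_⟩
    have h1 := hK ((2 * π)⁻¹ • (⟨η.1, η.2⟩ : ℂ))
    rw [← hF η] at h1
    have hpi : 1 ≤ 2 * π := by linarith [Real.pi_gt_three]
    have h2 : ‖η‖ ≤ ‖(⟨η.1, η.2⟩ : ℂ)‖ := by
      rw [Prod.norm_def]
      exact max_le (Complex.abs_re_le_norm ⟨η.1, η.2⟩) (Complex.abs_im_le_norm ⟨η.1, η.2⟩)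
    have h3 : 1 + ‖η‖ ≤ (2 * π) * (1 + ‖((2 * π)⁻¹ • (⟨η.1, η.2⟩ : ℂ))‖) := by
      rw [norm_smul, norm_inv, Real.norm_of_nonneg (by positivity), mul_add,
        mul_inv_cancel_left₀ (by positivity)]
      linarith
    have h4 : (1 + ‖η‖) ^ 6 * ‖ft2 (conv2 ϕ) η‖ ≤ K * (2 * π) ^ 6 := by
      calc (1 + ‖η‖) ^ 6 * ‖ft2 (conv2 ϕ) η‖
          ≤ ((2 * π) * (1 + ‖((2 * π)⁻¹ • (⟨η.1, η.2⟩ : ℂ))‖)) ^ 6 * ‖ft2 (conv2 ϕ) η‖ := by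
            gcongr
        _ = (2 * π) ^ 6 * ((1 + ‖((2 * π)⁻¹ • (⟨η.1, η.2⟩ : ℂ))‖) ^ 6 * ‖ft2 (conv2 ϕ) η‖) := by
            ring
        _ ≤ (2 * π) ^ 6 * K := by gcongr
        _ = _ := by ring
    have hp : 0 < 1 + ‖η‖ := by positivity
    rw [Real.rpow_neg hp.le, ← div_eq_mul_inv, le_div_iff₀ (by positivity)]
    have : (1 + ‖η‖) ^ (6 : ℝ) = (1 + ‖η‖) ^ 6 := by
      exact_mod_cast Real.rpow_natCast (1 + ‖η‖) 6
    rw [this]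
    linarith
  · intro x
    have hinv : 𝓕⁻ (𝓕 S) = S := FourierTransform.fourierInv_fourier_eq S
    have h0 : (𝓕⁻ (𝓕 S)) (⟨x, 0⟩ : ℂ) = (conv2 ϕ (x, 0) : ℂ) := by rw [hinv]; rfl
    rw [SchwartzMap.fourierInv_coe, Real.fourierInv_eq'] at h0
    rw [← h0, int_complex]
    have h5 := Measure.integral_comp_smul (volume : Measure ℂ)
      (fun v : ℂ => Complex.exp (((2 * π * inner ℝ v (⟨x, 0⟩ : ℂ) : ℝ) : ℂ) * Complex.I)
        • (𝓕 S) v) ((2 * π)⁻¹)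
    rw [Complex.finrank_real_complex] at h5
    have h6 : |(((2 * π)⁻¹) ^ 2)⁻¹| = (2 * π) ^ 2 := by
      rw [abs_of_nonneg (by positivity)]
      field_simp
    rw [h6] at h5
    have h7 : ((2 * π : ℂ)) ^ 2 = (((2 * π) ^ 2 : ℝ) : ℂ) := by push_cast; ring
    rw [h7, ← Complex.real_smul, ← h5]
    congr 1
    ext z
    rw [hF]
    simp only [smul_eq_mul]
    congr 2
    have : 2 * π * inner ℝ ((2 * π)⁻¹ • z) (⟨x, 0⟩ : ℂ) = x * z.re := by
      rw [real_inner_smul_left, Complex.inner]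
      simp
      field_simp
    rw [this]
    push_cast
    ring


/-! ### Oscillatory integrals with a weight -/

/-- The oscillatory integral with weight `w`. -/
def Aw (ψ w : ℝ × ℝ → ℂ) (x : ℝ) : ℂ :=
  ∫ η : ℝ × ℝ, Complex.exp (Complex.I * (x : ℂ) * (η.1 : ℂ)) * w η * ψ η

/-- Admissible weights of growth order `j`. -/
def Good (w : ℝ × ℝ → ℂ) (j : ℕ) : Prop :=
  Measurable w ∧ ∃ c : ℝ, 0 ≤ c ∧ ∀ η : ℝ × ℝ, η ≠ 0 → ‖w η‖ ≤ c * ‖η‖⁻¹ * (1 + ‖η‖) ^ j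

theorem Good.step {w : ℝ × ℝ → ℂ} {j : ℕ} (h : Good w j) :
    Good (fun η => Complex.I * (η.1 : ℂ) * w η) (j + 1) := by
  obtain ⟨hm, c, hc, hb⟩ := h
  refine ⟨by fun_prop, c, hc, fun η hη => ?_⟩
  have h1 := hb η hη
  rw [norm_mul, norm_mul, Complex.norm_I, one_mul, Complex.norm_real]
  have h2 : ‖η.1‖ ≤ 1 + ‖η‖ := by linarith [norm_fst_le η]
  calc ‖η.1‖ * ‖w η‖ ≤ (1 + ‖η‖) * (c * ‖η‖⁻¹ * (1 + ‖η‖) ^ j) := by gcongr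
    _ = _ := by ring

theorem Good.mono {w : ℝ × ℝ → ℂ} {j k : ℕ} (h : Good w j) (hjk : j ≤ k) : Good w k := by
  obtain ⟨hm, c, hc, hb⟩ := h
  refine ⟨hm, c, hc, fun η hη => (hb η hη).trans ?_⟩
  have : 1 ≤ 1 + ‖η‖ := by linarith [norm_nonneg η]
  gcongr

theorem base_integrable :
    Integrable (fun η : ℝ × ℝ => ‖η‖⁻¹ * (1 + ‖η‖) ^ (-(3 : ℝ))) := by
  have := (integrable_fun_norm_addHaar (E := ℝ × ℝ) (volume : Measure (ℝ × ℝ))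
    (f := fun y : ℝ => y⁻¹ * (1 + y) ^ (-(3 : ℝ)))).2 ?_
  · exact this
  have h1 : Integrable (fun y : ℝ => (1 + ‖y‖) ^ (-(3 : ℝ))) :=
    integrable_one_add_norm (by simp)
  refine (h1.integrableOn (s := Set.Ioi 0)).congr_fun ?_ measurableSet_Ioi
  intro y hy
  have hy' : (0 : ℝ) < y := hy
  simp only [Module.finrank_prod, Module.finrank_self]
  rw [Real.norm_of_nonneg hy'.le]
  simp only [Nat.add_one_sub_one, pow_one, smul_eq_mul]
  rw [mul_inv_cancel_left₀ hy'.ne']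

theorem Good.integrable {ψ w : ℝ × ℝ → ℂ} (hψ : Continuous ψ)
    (hd : ∃ C : ℝ, ∀ η, ‖ψ η‖ ≤ C * (1 + ‖η‖) ^ (-(6 : ℝ))) {j : ℕ} (h : Good w j)
    (hj : j ≤ 3) : Integrable (fun η => w η * ψ η) := by
  obtain ⟨hm, c, hc, hb⟩ := h.mono hj
  obtain ⟨C, hC⟩ := hd
  refine (base_integrable.const_mul (c * C)).mono' (by fun_prop) ?_
  have : ∀ᵐ η : ℝ × ℝ, η ≠ 0 := by
    simp [ae_iff]
  filter_upwards [this] with η hη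
  have hp : 0 < 1 + ‖η‖ := by positivity
  rw [norm_mul]
  calc ‖w η‖ * ‖ψ η‖ ≤ (c * ‖η‖⁻¹ * (1 + ‖η‖) ^ 3) * (C * (1 + ‖η‖) ^ (-(6 : ℝ))) := by
        gcongr
        · exact hb η hη
        · exact hC η
    _ = (c * C) * (‖η‖⁻¹ * ((1 + ‖η‖) ^ (3 : ℝ) * (1 + ‖η‖) ^ (-(6 : ℝ)))) := by
        have : (1 + ‖η‖) ^ (3 : ℝ) = (1 + ‖η‖) ^ 3 := by
          exact_mod_cast Real.rpow_natCast (1 + ‖η‖) 3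
        rw [this]; ring
    _ = _ := by
        rw [← Real.rpow_add hp]; norm_num

theorem norm_osc (x y : ℝ) : ‖Complex.exp (Complex.I * (x : ℂ) * (y : ℂ))‖ = 1 := by
  have : Complex.I * (x : ℂ) * (y : ℂ) = ((x * y : ℝ) : ℂ) * Complex.I := by push_cast; ring
  rw [this, Complex.norm_exp_ofReal_mul_I]

theorem osc_integrable {g : ℝ × ℝ → ℂ} (hg : Integrable g) (x : ℝ) :
    Integrable (fun η : ℝ × ℝ => Complex.exp (Complex.I * (x : ℂ) * (η.1 : ℂ)) * g η) := by
  refine hg.norm.mono' ?_ ?_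
  · exact (by fun_prop : Continuous fun η : ℝ × ℝ =>
      Complex.exp (Complex.I * (x : ℂ) * (η.1 : ℂ))).aestronglyMeasurable.mul hg.1
  · filter_upwards with η
    rw [norm_mul, norm_osc, one_mul]

theorem Aw_integrable {ψ w : ℝ × ℝ → ℂ} (hψ : Continuous ψ)
    (hd : ∃ C : ℝ, ∀ η, ‖ψ η‖ ≤ C * (1 + ‖η‖) ^ (-(6 : ℝ))) {j : ℕ} (h : Good w j)
    (hj : j ≤ 3) (x : ℝ) :
    Integrable (fun η : ℝ × ℝ => Complex.exp (Complex.I * (x : ℂ) * (η.1 : ℂ)) * w η * ψ η) := by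
  simpa only [mul_assoc] using osc_integrable (h.integrable hψ hd hj) x

theorem Aw_hasDerivAt {ψ w : ℝ × ℝ → ℂ} (hψ : Continuous ψ)
    (hd : ∃ C : ℝ, ∀ η, ‖ψ η‖ ≤ C * (1 + ‖η‖) ^ (-(6 : ℝ))) {j : ℕ} (h : Good w j)
    (hj : j ≤ 2) (x : ℝ) :
    HasDerivAt (Aw ψ w) (Aw ψ (fun η => Complex.I * (η.1 : ℂ) * w η) x) x := by
  have hi := h.step.integrable hψ hd (by omega)
  refine (hasDerivAt_integral_of_dominated_loc_of_deriv_le (s := Set.univ) (μ := volume)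
    (bound := fun η : ℝ × ℝ => ‖Complex.I * (η.1 : ℂ) * w η * ψ η‖)
    (F := fun (x : ℝ) (η : ℝ × ℝ) => Complex.exp (Complex.I * (x : ℂ) * (η.1 : ℂ)) * w η * ψ η)
    (F' := fun (x : ℝ) (η : ℝ × ℝ) => Complex.exp (Complex.I * (x : ℂ) * (η.1 : ℂ)) *
      (Complex.I * (η.1 : ℂ) * w η) * ψ η)
    Filter.univ_mem ?_ ?_ ?_ ?_ ?_ ?_).2
  · filter_upwards with y
    exact (Aw_integrable hψ hd h (by omega) y).1
  · exact Aw_integrable hψ hd h (by omega) x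
  · exact (Aw_integrable hψ hd h.step (by omega) x).1
  · filter_upwards with η y _
    rw [mul_assoc, norm_mul, norm_osc, one_mul]
  · exact hi.norm
  · filter_upwards with η y _
    have h1 : HasDerivAt (fun y : ℝ => Complex.I * (y : ℂ) * (η.1 : ℂ)) (Complex.I * (η.1 : ℂ)) y := by
      have := ((Complex.ofRealCLM.hasDerivAt (x := y)).const_mul Complex.I).mul_const (η.1 : ℂ)
      simpa using this
    have h2 := (h1.cexp.mul_const (w η)).mul_const (ψ η)
    refine HasDerivAt.congr_deriv h2 ?_
    ring

theorem Aw_contDiff {ψ : ℝ × ℝ → ℂ} (hψ : Continuous ψ)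
    (hd : ∃ C : ℝ, ∀ η, ‖ψ η‖ ≤ C * (1 + ‖η‖) ^ (-(6 : ℝ))) (n : ℕ) :
    ∀ (w : ℝ × ℝ → ℂ) (j : ℕ), Good w j → n + j ≤ 2 → ContDiff ℝ n (Aw ψ w) := by
  induction n with
  | zero =>
    intro w j h hj
    have : Continuous (Aw ψ w) := continuous_iff_continuousAt.2 fun x =>
      (Aw_hasDerivAt hψ hd h (by omega) x).continuousAt
    simpa using this
  | succ n ih =>
    intro w j h hj
    have hD := fun x => Aw_hasDerivAt hψ hd h (by omega) x
    push_cast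
    rw [contDiff_succ_iff_deriv]
    refine ⟨fun x => (hD x).differentiableAt, by simp, ?_⟩
    have : deriv (Aw ψ w) = Aw ψ (fun η => Complex.I * (η.1 : ℂ) * w η) :=
      funext fun x => (hD x).deriv
    rw [this]
    exact ih _ (j + 1) h.step (by omega)

theorem polar_zero (N : ℝ × ℝ → ℂ) (B D : ℝ → ℝ → ℂ)
    (hD : ∀ r, 0 < r → Continuous (D r))
    (hB : ∀ r, 0 < r → ∀ θ, HasDerivAt (B r) (D r θ) θ)
    (hN : ∀ r, 0 < r → ∀ θ, r • N (r * cos θ, r * sin θ) = D r θ)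
    (hp : ∀ r, 0 < r → B r π = B r (-π)) : (∫ η, N η) = 0 := by
  rw [← integral_comp_polarCoord_symm, polarCoord_target]
  by_cases hi : IntegrableOn (fun p : ℝ × ℝ => p.1 • N (polarCoord.symm p))
      (Set.Ioi 0 ×ˢ Set.Ioo (-π) π)
  · rw [Measure.volume_eq_prod, setIntegral_prod _ hi]
    refine (setIntegral_congr_fun measurableSet_Ioi (g := fun _ => (0 : ℂ)) ?_).trans (by simp)
    intro r hr
    have hr' : (0 : ℝ) < r := hr
    simp only [polarCoord_symm_apply]
    rw [← integral_Ioc_eq_integral_Ioo, ← intervalIntegral.integral_of_le (by linarith [pi_pos])]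
    simp_rw [hN r hr']
    rw [intervalIntegral.integral_eq_sub_of_hasDerivAt (fun θ _ => hB r hr' θ)
      ((hD r hr').intervalIntegrable _ _), hp r hr', sub_self]
  · exact integral_undef hi

/-- weights -/
def w1 (η : ℝ × ℝ) : ℂ :=
  -Complex.I * (η.1 : ℂ) * (η.2 : ℂ) ^ 2 / ((η.1 : ℂ) ^ 2 + (η.2 : ℂ) ^ 2) ^ 2

/-- weights -/
def w2 (η : ℝ × ℝ) : ℂ :=
  -Complex.I * (η.1 : ℂ) * ((η.1 : ℂ) ^ 2 - (η.2 : ℂ) ^ 2) /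
        ((η.1 : ℂ) ^ 2 + (η.2 : ℂ) ^ 2) ^ 2

/-- weights -/
def wS (η : ℝ × ℝ) : ℂ := w2 η + 2 * w1 η

theorem sup_sq_le (η : ℝ × ℝ) : ‖η‖ ^ 2 ≤ η.1 ^ 2 + η.2 ^ 2 := by
  rw [Prod.norm_def]
  rcases max_choice ‖η.1‖ ‖η.2‖ with h | h <;> rw [h] <;> simp only [norm_eq_abs, sq_abs] <;>
    nlinarith [sq_nonneg η.1, sq_nonneg η.2]

theorem good_aux (η : ℝ × ℝ) (hη : η ≠ 0) (q : ℝ) (hq : |q| ≤ η.1 ^ 2 + η.2 ^ 2) :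
    ‖-Complex.I * (η.1 : ℂ) * (q : ℂ) / ((η.1 : ℂ) ^ 2 + (η.2 : ℂ) ^ 2) ^ 2‖
      ≤ 1 * ‖η‖⁻¹ * (1 + ‖η‖) ^ 0 := by
  have h0 : 0 < ‖η‖ := norm_pos_iff.2 hη
  have h1 := sup_sq_le η
  have hs : 0 < η.1 ^ 2 + η.2 ^ 2 := lt_of_lt_of_le (by positivity) h1
  have e : ((η.1 : ℂ) ^ 2 + (η.2 : ℂ) ^ 2) ^ 2 = (((η.1 ^ 2 + η.2 ^ 2) ^ 2 : ℝ) : ℂ) := by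
    push_cast; ring
  rw [e, norm_div, norm_mul, norm_mul, norm_neg, Complex.norm_I, Complex.norm_real,
    Complex.norm_real, Complex.norm_real, Real.norm_of_nonneg (by positivity : (0:ℝ) ≤ (η.1 ^ 2 + η.2 ^ 2) ^ 2)]
  rw [div_le_iff₀ (by positivity)]
  have h2 : ‖η.1‖ ≤ ‖η‖ := norm_fst_le η
  rw [norm_eq_abs q]
  calc 1 * ‖η.1‖ * |q| ≤ ‖η‖ * (η.1 ^ 2 + η.2 ^ 2) := by rw [one_mul]; gcongr
    _ = ‖η‖⁻¹ * ‖η‖ ^ 2 * (η.1 ^ 2 + η.2 ^ 2) := by field_simp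
    _ ≤ ‖η‖⁻¹ * (η.1 ^ 2 + η.2 ^ 2) * (η.1 ^ 2 + η.2 ^ 2) := by gcongr
    _ = _ := by ring

theorem good1 : Good w1 0 := by
  refine ⟨by unfold w1; fun_prop, 1, zero_le_one, fun η hη => ?_⟩
  have := good_aux η hη (η.2 ^ 2) (by rw [abs_of_nonneg (sq_nonneg _)]; nlinarith [sq_nonneg η.1])
  simpa [w1] using this

theorem good2 : Good w2 0 := by
  refine ⟨by unfold w2; fun_prop, 1, zero_le_one, fun η hη => ?_⟩
  have := good_aux η hη (η.1 ^ 2 - η.2 ^ 2)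
    (by rw [abs_le]; constructor <;> nlinarith [sq_nonneg η.1, sq_nonneg η.2])
  simpa [w2] using this

theorem goodS : Good wS 0 := by
  obtain ⟨m1, c1, hc1, h1⟩ := good1
  obtain ⟨m2, c2, hc2, h2⟩ := good2
  refine ⟨by unfold wS; fun_prop, c2 + 2 * c1, by positivity, fun η hη => ?_⟩
  unfold wS
  refine (norm_add_le _ _).trans ?_
  rw [norm_mul]
  have := h1 η hη
  have := h2 η hη
  have h3 : ‖(2 : ℂ)‖ = 2 := by simp
  rw [h3]
  linarith

theorem goodOne : Good (fun _ => 1) 1 := by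
  refine ⟨by fun_prop, 1, zero_le_one, fun η hη => ?_⟩
  have h0 : 0 < ‖η‖ := norm_pos_iff.2 hη
  simp only [norm_one, one_mul, pow_one]
  rw [mul_add, inv_mul_cancel₀ h0.ne']
  have : 0 ≤ ‖η‖⁻¹ * 1 := by positivity
  linarith

theorem polar_sq (r θ : ℝ) :
    ((r * cos θ : ℝ) : ℂ) ^ 2 + ((r * sin θ : ℝ) : ℂ) ^ 2 = (r : ℂ) ^ 2 := by
  norm_cast
  nlinarith [sin_sq_add_cos_sq θ]

theorem osc_theta (x r θ : ℝ) :
    HasDerivAt (fun θ : ℝ => Complex.exp (Complex.I * (x : ℂ) * ((r * cos θ : ℝ) : ℂ)))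
      (Complex.exp (Complex.I * (x : ℂ) * ((r * cos θ : ℝ) : ℂ)) *
        (Complex.I * (x : ℂ) * ((r * -sin θ : ℝ) : ℂ))) θ := by
  have h1 : HasDerivAt (fun θ : ℝ => ((r * cos θ : ℝ) : ℂ)) ((r * -sin θ : ℝ) : ℂ) θ :=
    ((hasDerivAt_cos θ).const_mul r).ofReal_comp
  exact (h1.const_mul _).cexp

theorem cs_sq (θ : ℝ) : (sin θ : ℂ) ^ 2 = 1 - (cos θ : ℂ) ^ 2 := by
  norm_cast
  have := sin_sq_add_cos_sq θ
  have h : sin θ ^ 2 = 1 - cos θ ^ 2 := by linarith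
  exact_mod_cast h

theorem w1_polar (r θ : ℝ) (hr : 0 < r) :
    w1 (r * cos θ, r * sin θ) = -Complex.I * cos θ * (sin θ : ℂ) ^ 2 / r := by
  unfold w1
  simp only
  rw [polar_sq]
  have : (r : ℂ) ≠ 0 := by exact_mod_cast hr.ne'
  push_cast
  field_simp

theorem wS_polar (r θ : ℝ) (hr : 0 < r) :
    wS (r * cos θ, r * sin θ) = -Complex.I * cos θ / r := by
  unfold wS
  rw [w1_polar r θ hr]
  unfold w2
  simp only
  rw [polar_sq]
  have : (r : ℂ) ≠ 0 := by exact_mod_cast hr.ne'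
  have h2 := cs_sq θ
  push_cast at h2 ⊢
  field_simp
  rw [h2]
  ring

theorem identA {ψ : ℝ × ℝ → ℂ} (hψ : Continuous ψ)
    (hd : ∃ C : ℝ, ∀ η, ‖ψ η‖ ≤ C * (1 + ‖η‖) ^ (-(6 : ℝ)))
    (hrad : ∀ r θ : ℝ, ψ (r * cos θ, r * sin θ) = ψ (r, 0)) (x : ℝ) :
    Aw ψ wS x + x * Aw ψ (fun η => Complex.I * (η.1 : ℂ) * wS η) x
      = x * Aw ψ (fun _ => 1) x := by
  have i1 := Aw_integrable hψ hd goodS (by omega) x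
  have i2 := (Aw_integrable hψ hd goodS.step (by omega) x).const_mul (x : ℂ)
  have i3 := (Aw_integrable hψ hd goodOne (by omega) x).const_mul (x : ℂ)
  rw [← sub_eq_zero]
  unfold Aw
  rw [← integral_const_mul, ← integral_const_mul, ← integral_add i1 i2]
  refine Eq.trans (integral_sub (i1.add i2) i3).symm ?_
  refine polar_zero _
    (fun r θ => -Complex.I * (sin θ : ℂ) *
      Complex.exp (Complex.I * (x : ℂ) * ((r * cos θ : ℝ) : ℂ)) * ψ (r, 0))
    (fun r θ => (-Complex.I * (cos θ : ℂ) - x * r * (sin θ : ℂ) ^ 2) *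
      Complex.exp (Complex.I * (x : ℂ) * ((r * cos θ : ℝ) : ℂ)) * ψ (r, 0)) ?_ ?_ ?_ ?_
  · intro r hr
    fun_prop
  · intro r hr θ
    have h1 : HasDerivAt (fun θ : ℝ => -Complex.I * ((sin θ : ℝ) : ℂ)) (-Complex.I * ((cos θ : ℝ) : ℂ)) θ :=
      (hasDerivAt_sin θ).ofReal_comp.const_mul _
    have h2 := (h1.mul (osc_theta x r θ)).mul_const (ψ (r, 0))
    refine HasDerivAt.congr_deriv h2 ?_
    push_cast
    linear_combination (x * r * Complex.sin θ ^ 2 * ψ (r, 0) *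
      Complex.exp (Complex.I * (x : ℂ) * ((r : ℂ) * Complex.cos θ))) * (Complex.I_sq)
  · intro r hr θ
    have hr0 : (r : ℂ) ≠ 0 := by exact_mod_cast hr.ne'
    simp only [Pi.add_apply, hrad, wS_polar r θ hr]
    have h2 := cs_sq θ
    rw [Complex.real_smul, h2]
    push_cast
    field_simp
    ring_nf
    simp only [Complex.I_sq]
    ring
  · intro r hr
    simp

theorem identB {ψ : ℝ × ℝ → ℂ} (hψ : Continuous ψ)
    (hd : ∃ C : ℝ, ∀ η, ‖ψ η‖ ≤ C * (1 + ‖η‖) ^ (-(6 : ℝ)))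
    (hrad : ∀ r θ : ℝ, ψ (r * cos θ, r * sin θ) = ψ (r, 0)) (x : ℝ) :
    3 * Aw ψ w1 x + x * Aw ψ (fun η => Complex.I * (η.1 : ℂ) * w1 η) x
      = Aw ψ wS x := by
  have i1 := (Aw_integrable hψ hd good1 (by omega) x).const_mul (3 : ℂ)
  have i2 := (Aw_integrable hψ hd good1.step (by omega) x).const_mul (x : ℂ)
  have i3 := (Aw_integrable hψ hd goodS (by omega) x)
  rw [← sub_eq_zero]
  unfold Aw
  rw [← integral_const_mul, ← integral_const_mul, ← integral_add i1 i2]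
  refine Eq.trans (integral_sub (i1.add i2) i3).symm ?_
  refine polar_zero _
    (fun r θ => Complex.I * ((sin θ : ℂ) * (cos θ : ℂ) ^ 2) *
      Complex.exp (Complex.I * (x : ℂ) * ((r * cos θ : ℝ) : ℂ)) * ψ (r, 0))
    (fun r θ => (Complex.I * ((cos θ : ℂ) * (cos θ : ℂ) ^ 2 - 2 * (sin θ : ℂ) ^ 2 * (cos θ : ℂ))
        + x * r * (sin θ : ℂ) ^ 2 * (cos θ : ℂ) ^ 2) *
      Complex.exp (Complex.I * (x : ℂ) * ((r * cos θ : ℝ) : ℂ)) * ψ (r, 0)) ?_ ?_ ?_ ?_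
  · intro r hr
    fun_prop
  · intro r hr θ
    have h1 : HasDerivAt (fun θ : ℝ => Complex.I * (((sin θ : ℝ) : ℂ) * ((cos θ : ℝ) : ℂ) ^ 2))
        (Complex.I * (((cos θ : ℝ) : ℂ) * ((cos θ : ℝ) : ℂ) ^ 2 +
          ((sin θ : ℝ) : ℂ) * (2 * ((cos θ : ℝ) : ℂ) * ((-sin θ : ℝ) : ℂ)))) θ := by
      have a := (hasDerivAt_sin θ).ofReal_comp
      have b := (hasDerivAt_cos θ).ofReal_comp
      have := (a.mul (b.pow 2)).const_mul Complex.I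
      refine HasDerivAt.congr_deriv this ?_
      simp
    have h2 := (h1.mul (osc_theta x r θ)).mul_const (ψ (r, 0))
    refine HasDerivAt.congr_deriv h2 ?_
    push_cast
    linear_combination (- x * r * Complex.sin θ ^ 2 * Complex.cos θ ^ 2 * ψ (r, 0) *
      Complex.exp (Complex.I * (x : ℂ) * ((r : ℂ) * Complex.cos θ))) * (Complex.I_sq)
  · intro r hr θ
    have hr0 : (r : ℂ) ≠ 0 := by exact_mod_cast hr.ne'
    simp only [Pi.add_apply, hrad, wS_polar r θ hr, w1_polar r θ hr]
    have h2 := cs_sq θ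
    rw [Complex.real_smul, h2]
    push_cast
    field_simp
    ring_nf
    simp only [Complex.I_sq]
    ring
  · intro r hr
    simp

/-! ### Decay -/

theorem iter_tail (c : ℂ) (k : ℕ) (hk : k ≤ 2) (x : ℝ) (hx : 1 ≤ |x|) (g : ℝ → ℂ)
    (hg : g =ᶠ[𝓝 x] fun y => ((y ^ (-2 : ℤ) : ℝ) : ℂ) * c) :
    ‖iteratedDeriv k g x‖ * (1 + |x| ^ (k + 2)) ≤ 12 * ‖c‖ := by
  have hx0 : x ≠ 0 := by
    rintro rfl
    norm_num at hx
  have hd : ∀ (m : ℤ) (y : ℝ), y ≠ 0 → ∀ a : ℂ,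
      HasDerivAt (fun y : ℝ => ((y ^ m : ℝ) : ℂ) * a) (((m * y ^ (m - 1) : ℝ) : ℂ) * a) y :=
    fun m y hy a => ((hasDerivAt_zpow m y (Or.inl hy)).ofReal_comp).mul_const a
  have d1 : deriv (fun y : ℝ => ((y ^ (-2 : ℤ) : ℝ) : ℂ) * c) =ᶠ[𝓝 x]
      fun y => ((y ^ (-3 : ℤ) : ℝ) : ℂ) * (-2 * c) := by
    filter_upwards [isOpen_ne.mem_nhds hx0] with y hy
    rw [(hd (-2) y hy c).deriv]
    norm_num
    ring
  have main : ‖iteratedDeriv k g x‖ ≤ 6 * ‖c‖ * |x| ^ (-(k : ℤ) - 2) := by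
    rw [hg.iteratedDeriv_eq k]
    interval_cases k
    · rw [iteratedDeriv_zero, norm_mul, Complex.norm_real, norm_zpow, norm_eq_abs]
      have : 0 ≤ ‖c‖ * |x| ^ (-2 : ℤ) := by positivity
      norm_num at this ⊢
      nlinarith
    · rw [iteratedDeriv_one, d1.eq_of_nhds, norm_mul, Complex.norm_real, norm_zpow, norm_eq_abs,
        norm_mul]
      have : 0 ≤ ‖c‖ * |x| ^ (-3 : ℤ) := by positivity
      norm_num at this ⊢
      nlinarith
    · rw [iteratedDeriv_succ, iteratedDeriv_one, d1.deriv_eq, (hd (-3) x hx0 _).deriv, norm_mul,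
        Complex.norm_real, norm_mul, norm_zpow, norm_eq_abs, norm_mul]
      have : 0 ≤ ‖c‖ * |x| ^ (-4 : ℤ) := by positivity
      norm_num at this ⊢
      nlinarith
  have hxp : 0 < |x| := by linarith
  have h1 : 1 ≤ |x| ^ (k + 2) := one_le_pow₀ hx
  calc ‖iteratedDeriv k g x‖ * (1 + |x| ^ (k + 2))
      ≤ (6 * ‖c‖ * |x| ^ (-(k : ℤ) - 2)) * (2 * |x| ^ (k + 2)) := by
        gcongr
        linarith
    _ = 12 * ‖c‖ * (|x| ^ (-(k : ℤ) - 2) * |x| ^ ((k + 2 : ℕ) : ℤ)) := by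
        rw [zpow_natCast]; ring
    _ = 12 * ‖c‖ := by
        rw [← zpow_add₀ hxp.ne']
        have : (-(k : ℤ) - 2 + ((k + 2 : ℕ) : ℤ)) = 0 := by push_cast; ring
        rw [this]; simp

theorem decay_lemma (g : ℝ → ℂ) (hg : ContDiff ℝ 2 g) (R : ℝ) (c₁ c₂ : ℂ)
    (h₁ : ∀ x, R < x → g x = ((x ^ (-2 : ℤ) : ℝ) : ℂ) * c₁)
    (h₂ : ∀ x, x < -R → g x = ((x ^ (-2 : ℤ) : ℝ) : ℂ) * c₂) :
    ∃ C : ℝ, 0 < C ∧ ∀ k : ℕ, k ≤ 2 → ∀ x : ℝ,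
      ‖iteratedDeriv k g x‖ ≤ C / (1 + |x| ^ (k + 2)) := by
  have key : ∀ k : ℕ, k ≤ 2 → ∃ M : ℝ, ∀ x ∈ Set.Icc (-(|R| + 1)) (|R| + 1),
      ‖iteratedDeriv k g x‖ * (1 + |x| ^ (k + 2)) ≤ M := by
    intro k hk
    have hc : Continuous (iteratedDeriv k g) :=
      hg.continuous_iteratedDeriv k (by exact_mod_cast hk)
    have hc2 : Continuous fun x => ‖iteratedDeriv k g x‖ * (1 + |x| ^ (k + 2)) := by fun_prop
    obtain ⟨M, hM⟩ := isCompact_Icc.bddAbove_image (hc2.continuousOn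
      (s := Set.Icc (-(|R| + 1)) (|R| + 1)))
    exact ⟨M, fun x hx => hM (Set.mem_image_of_mem _ hx)⟩
  obtain ⟨M0, hM0⟩ := key 0 (by norm_num)
  obtain ⟨M1, hM1⟩ := key 1 (by norm_num)
  obtain ⟨M2, hM2⟩ := key 2 (by norm_num)
  refine ⟨|M0| + |M1| + |M2| + 12 * ‖c₁‖ + 12 * ‖c₂‖ + 1, by positivity, fun k hk x => ?_⟩
  rw [le_div_iff₀ (by positivity)]
  have n1 := norm_nonneg c₁
  have n2 := norm_nonneg c₂
  have a0 := abs_nonneg M0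
  have a1 := abs_nonneg M1
  have a2 := abs_nonneg M2
  have b0 := le_abs_self M0
  have b1 := le_abs_self M1
  have b2 := le_abs_self M2
  have hR := le_abs_self R
  have hR0 := abs_nonneg R
  rcases lt_or_ge (|R| + 1) x with h | h
  · have := iter_tail c₁ k hk x (by rw [le_abs]; left; linarith) g (by
      filter_upwards [lt_mem_nhds (show R < x by linarith)] with y hy using h₁ y hy)
    linarith
  rcases lt_or_ge x (-(|R| + 1)) with h' | h'
  · have := iter_tail c₂ k hk x (by rw [le_abs]; right; linarith) g (by
      filter_upwards [gt_mem_nhds (show x < -R by linarith)] with y hy using h₂ y hy)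
    linarith
  have hx : x ∈ Set.Icc (-(|R| + 1)) (|R| + 1) := ⟨h', h⟩
  interval_cases k
  · have := hM0 x hx
    linarith
  · have := hM1 x hx
    linarith
  · have := hM2 x hx
    linarith

/-! ### Normalization in polar coordinates -/

theorem polar_mass (φ : ℝ × ℝ → ℝ) (hr : ∀ r θ : ℝ, φ (r * cos θ, r * sin θ) = φ (r, 0))
    (h1 : (∫ x, φ x) = 1) : (∫ s in Set.Ioi (0 : ℝ), 2 * π * s * φ (s, 0)) = 1 := by
  rw [← integral_comp_polarCoord_symm, polarCoord_target] at h1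
  simp only [polarCoord_symm_apply, hr] at h1
  have := setIntegral_prod_mul (μ := (volume : Measure ℝ)) (ν := (volume : Measure ℝ))
    (fun s : ℝ => s * φ (s, 0)) (fun _ : ℝ => (1 : ℝ)) (Set.Ioi 0) (Set.Ioo (-π) π)
  rw [← Measure.volume_eq_prod] at this
  simp only [mul_one] at this
  simp only [smul_eq_mul] at h1
  rw [this] at h1
  simp only [mul_assoc]
  rw [integral_const_mul, integral_const_mul]
  rw [← h1]
  simp
  rw [max_eq_left (by linarith [pi_pos])]
  ring

theorem tail_const (u : ℝ → ℂ) (s : Set ℝ) (hs : IsOpen s) (hc : IsPreconnected s)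
    (hu : ∀ x ∈ s, HasDerivAt u (2 * (x : ℂ)) x) : ∃ c : ℂ, ∀ x ∈ s, u x = (x : ℂ) ^ 2 + c := by
  have hv : ∀ x ∈ s, HasDerivAt (fun x : ℝ => u x - (x : ℂ) ^ 2) 0 x := by
    intro x hx
    have h1 : HasDerivAt (fun x : ℝ => (x : ℂ)) 1 x := by
      simpa using (hasDerivAt_id x).ofReal_comp
    have := (hu x hx).sub (h1.pow 2)
    refine HasDerivAt.congr_deriv this ?_
    simp
  obtain ⟨c, hc⟩ := hs.exists_is_const_of_deriv_eq_zero hc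
    (fun x hx => (hv x hx).differentiableAt.differentiableWithinAt)
    (fun x hx => (hv x hx).deriv)
  refine ⟨c, fun x hx => ?_⟩
  rw [← hc x hx]
  ring

theorem f1_eq (ϕ : ℝ × ℝ → ℝ) (x : ℝ) :
    f1 ϕ x = ((x / π : ℝ) : ℂ) * Aw (ft2 (conv2 ϕ)) w1 x := rfl

theorem f2_eq (ϕ : ℝ × ℝ → ℝ) (x : ℝ) :
    f2 ϕ x = ((x / π : ℝ) : ℂ) * Aw (ft2 (conv2 ϕ)) w2 x := rfl
/-- Regularity and decay of the auxiliary functions `f₂` and `f₃`. -/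
theorem statement7 (ϕ : ℝ × ℝ → ℝ)
    (hsmooth : ContDiff ℝ (⊤ : ℕ∞) ϕ)
    (hsupp : HasCompactSupport ϕ)
    (hradial : ∀ x y : ℝ × ℝ, x.1 ^ 2 + x.2 ^ 2 = y.1 ^ 2 + y.2 ^ 2 → ϕ x = ϕ y)
    (hnorm : (∫ x : ℝ × ℝ, ϕ x) = 1) :
    ContDiff ℝ 2 (f2 ϕ) ∧ ContDiff ℝ 2 (f3 ϕ) ∧
      ∃ C : ℝ, 0 < C ∧
        ∀ k : ℕ, k ≤ 2 → ∀ x : ℝ,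
          ‖iteratedDeriv k (f2 ϕ) x‖ + ‖iteratedDeriv k (f3 ϕ) x‖
            ≤ C / (1 + |x| ^ (k + 2)) := by
  set ψ := ft2 (conv2 ϕ) with hψdef
  obtain ⟨hψ, hd, hinv⟩ := ft2_props ϕ hsmooth hsupp
  rw [← hψdef] at hψ hd hinv
  have hrad : ∀ r θ : ℝ, ψ (r * cos θ, r * sin θ) = ψ (r, 0) := ft2_rot ϕ hradial
  have hpol := conv2_polar ϕ hradial
  have hmass := polar_mass _ hpol (conv2_int ϕ hsmooth hsupp hnorm)
  have hpi : (π : ℂ) ≠ 0 := by exact_mod_cast pi_pos.ne'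
  have hxc : ContDiff ℝ 2 (fun x : ℝ => ((x / π : ℝ) : ℂ)) :=
    Complex.ofRealCLM.contDiff.comp (contDiff_id.div_const π)
  have C1 : ContDiff ℝ 2 (f1 ϕ) := by
    have := Aw_contDiff hψ hd 2 w1 0 good1 (by norm_num)
    exact hxc.mul this
  have C2 : ContDiff ℝ 2 (f2 ϕ) := by
    have := Aw_contDiff hψ hd 2 w2 0 good2 (by norm_num)
    exact hxc.mul this
  have C3 : ContDiff ℝ 2 (f3 ϕ) := C1.sub contDiff_const
  have hid : ∀ x : ℝ, HasDerivAt (fun x : ℝ => (x : ℂ)) 1 x := fun x => by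
    simpa using (hasDerivAt_id x).ofReal_comp
  -- the support radius
  obtain ⟨R, hR0, hR⟩ : ∃ R : ℝ, 0 < R ∧ ∀ x : ℝ, R ≤ |x| → conv2 ϕ (x, 0) = 0 := by
    obtain ⟨R, hR0, hR⟩ := (conv2_supp ϕ hsupp).exists_pos_le_norm
    refine ⟨R, hR0, fun x hx => hR _ ?_⟩
    rw [Prod.norm_def]
    exact hx.trans (le_max_left _ _)
  have hphic : Continuous fun s : ℝ => conv2 ϕ (s, 0) :=
    (conv2_smooth ϕ hsmooth hsupp).continuous.comp (by fun_prop)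
  have heven : ∀ s : ℝ, conv2 ϕ (-s, 0) = conv2 ϕ (s, 0) := by
    intro s
    have := hpol s π
    simpa using this
  -- the function h
  let h : ℝ → ℂ := fun x => (x : ℂ) * Aw ψ wS x / (2 * π)
  have hder : ∀ x, HasDerivAt h ((2 * π * x * conv2 ϕ (x, 0) : ℝ) : ℂ) x := by
    intro x
    have a := ((hid x).mul (Aw_hasDerivAt hψ hd goodS (by norm_num) x)).div_const (2 * π : ℂ)
    refine HasDerivAt.congr_deriv a ?_
    have e := identA hψ hd hrad x
    have e2 : Aw ψ (fun _ => 1) x = (2 * π : ℂ) ^ 2 * (conv2 ϕ (x, 0) : ℂ) := by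
      rw [← hinv x]
      simp [Aw]
    rw [one_mul, e, e2]
    push_cast
    field_simp
  have hint : ∀ x, h x = ((∫ s in (0 : ℝ)..x, 2 * π * s * conv2 ϕ (s, 0) : ℝ) : ℂ) := by
    intro x
    have h0 : h 0 = 0 := by simp [h]
    have := intervalIntegral.integral_eq_sub_of_hasDerivAt (a := 0) (b := x)
      (fun y _ => hder y) (Continuous.intervalIntegrable (by fun_prop) _ _)
    rw [h0, sub_zero] at this
    rw [← this, intervalIntegral.integral_ofReal]
  have hpos : ∀ x, R < x → (∫ s in (0 : ℝ)..x, 2 * π * s * conv2 ϕ (s, 0)) = 1 := by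
    intro x hx
    rw [intervalIntegral.integral_of_le (by linarith), ← hmass]
    symm
    refine setIntegral_eq_of_subset_of_forall_sdiff_eq_zero measurableSet_Ioi
      Set.Ioc_subset_Ioi_self ?_
    intro y hy
    have hy0 : 0 < y := hy.1
    have hyx : x < y := by
      by_contra hcon
      exact hy.2 ⟨hy0, not_lt.1 hcon⟩
    rw [hR y (by rw [abs_of_pos hy0]; linarith), mul_zero]
  have hneg : ∀ x, (∫ s in (0 : ℝ)..-x, 2 * π * s * conv2 ϕ (s, 0))
      = ∫ s in (0 : ℝ)..x, 2 * π * s * conv2 ϕ (s, 0) := by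
    intro x
    have := intervalIntegral.integral_comp_neg (a := 0) (b := x)
      (fun s => 2 * π * s * conv2 ϕ (s, 0))
    rw [neg_zero] at this
    have e : (fun s => 2 * π * (-s) * conv2 ϕ (-s, 0)) =
        fun s => -(2 * π * s * conv2 ϕ (s, 0)) := by
      ext s; rw [heven]; ring
    simp only [e, intervalIntegral.integral_neg] at this
    rw [intervalIntegral.integral_symm, ← this, neg_neg]
  have hh : ∀ x, R < |x| → h x = 1 := by
    intro x hx
    rw [hint]
    rcases le_total 0 x with hx0 | hx0
    · rw [abs_of_nonneg hx0] at hx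
      rw [hpos x hx]; simp
    · rw [abs_of_nonpos hx0] at hx
      rw [← hneg, hpos _ hx]; simp
  -- relation between f1, f2, h
  have hrel : ∀ x, f2 ϕ x = 2 * h x - 2 * f1 ϕ x := by
    intro x
    have i1 := (Aw_integrable hψ hd good1 (by norm_num) x).const_mul (2 : ℂ)
    have i2 := (Aw_integrable hψ hd good2 (by norm_num) x)
    have e : Aw ψ wS x = Aw ψ w2 x + 2 * Aw ψ w1 x := by
      unfold Aw
      rw [← integral_const_mul, ← integral_add i2 i1]
      congr 1
      ext η
      unfold wS
      ring
    rw [f1_eq, f2_eq, ← hψdef]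
    simp only [h, e]
    push_cast
    field_simp
    ring
  have hU : ∀ x : ℝ, HasDerivAt (fun x : ℝ => (x : ℂ) ^ 2 * f1 ϕ x) (2 * (x : ℂ) * h x) x := by
    intro x
    have a := (((hid x).pow 3).mul (Aw_hasDerivAt hψ hd good1 (by norm_num) x)).div_const (π : ℂ)
    have e := identB hψ hd hrad x
    have ef : (fun x : ℝ => (x : ℂ) ^ 2 * f1 ϕ x) =
        fun x : ℝ => (x : ℂ) ^ 3 * Aw ψ w1 x / (π : ℂ) := by
      ext y
      rw [f1_eq]
      push_cast
      field_simp
      rfl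
    rw [ef]
    refine HasDerivAt.congr_deriv a ?_
    simp only [h, ← e, Pi.pow_apply]
    push_cast
    field_simp
  obtain ⟨c₁, hc₁⟩ := tail_const (fun x : ℝ => (x : ℂ) ^ 2 * f1 ϕ x) (Set.Ioi R) isOpen_Ioi
    isPreconnected_Ioi (fun x hx => by
      have := hU x
      rwa [hh x (lt_of_lt_of_le hx (le_abs_self x)), mul_one] at this)
  obtain ⟨c₂, hc₂⟩ := tail_const (fun x : ℝ => (x : ℂ) ^ 2 * f1 ϕ x) (Set.Iio (-R)) isOpen_Iio
    isPreconnected_Iio (fun x hx => by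
      have := hU x
      have hx' : x < -R := hx
      rwa [hh x (lt_of_lt_of_le (by linarith) (neg_le_abs x)), mul_one] at this)
  have solve : ∀ (x : ℝ) (c : ℂ), x ≠ 0 → (x : ℂ) ^ 2 * f1 ϕ x = (x : ℂ) ^ 2 + c →
      f3 ϕ x = ((x ^ (-2 : ℤ) : ℝ) : ℂ) * c := by
    intro x c hx hxc
    have hx' : (x : ℂ) ≠ 0 := by exact_mod_cast hx
    have hcc : c = (x : ℂ) ^ 2 * f1 ϕ x - (x : ℂ) ^ 2 := by rw [hxc]; ring
    rw [hcc, f3, zpow_neg]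
    push_cast
    field_simp
  have solve2 : ∀ (x : ℝ) (c : ℂ), R < |x| → f3 ϕ x = ((x ^ (-2 : ℤ) : ℝ) : ℂ) * c →
      f2 ϕ x = ((x ^ (-2 : ℤ) : ℝ) : ℂ) * (-2 * c) := by
    intro x c hx hxc
    have : f1 ϕ x = ((x ^ (-2 : ℤ) : ℝ) : ℂ) * c + 1 := by rw [← hxc, f3]; ring
    rw [hrel, hh x hx, this]
    ring
  have t1 : ∀ x, R < x → f3 ϕ x = ((x ^ (-2 : ℤ) : ℝ) : ℂ) * c₁ := fun x hx =>
    solve x c₁ (by linarith) (hc₁ x hx)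
  have t2 : ∀ x, x < -R → f3 ϕ x = ((x ^ (-2 : ℤ) : ℝ) : ℂ) * c₂ := fun x hx =>
    solve x c₂ (by linarith) (hc₂ x hx)
  obtain ⟨K3, hK3, hb3⟩ := decay_lemma (f3 ϕ) C3 R c₁ c₂ t1 t2
  obtain ⟨K2, hK2, hb2⟩ := decay_lemma (f2 ϕ) C2 R (-2 * c₁) (-2 * c₂)
    (fun x hx => solve2 x c₁ (lt_of_lt_of_le hx (le_abs_self x)) (t1 x hx))
    (fun x hx => solve2 x c₂ (lt_of_lt_of_le (by linarith) (neg_le_abs x)) (t2 x hx))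
  refine ⟨C2, C3, K2 + K3, by positivity, fun k hk x => ?_⟩
  rw [add_div]
  exact add_le_add (hb2 k hk x) (hb3 k hk x)
end
end
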